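/- arXiv:1412.3178 — 2 statements merged into one kernel-verified Lean document; each statement's English description precedes it below -/
import Mathlib

section
/- Let C ⊆ ℝⁿ be a nonempty closed semi-algebraic set and let ν be a semi-algebraic norm on ℝⁿ such that both ν and its dual norm ν* are (Fréchet) differentiable at every point other than the origin. Then the set S(C) of all points x ∈ ℝⁿ for which the best ν-approximation of x in C is not unique is a nowhere dense semi-algebraic set; in particular, S(C) is contained in the zero set of some nonzero polynomial in n real variables. -/
/-- A subset of `ℝⁿ` is semi-algebraic if it is a finite union of sets of the form
`{x : P₁(x) > 0, …, P_λ(x) > 0, Q(x) = 0}` with `P₁, …, P_λ, Q` real polynomials. -/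
def IsSemialgebraic {n : ℕ} (S : Set (Fin n → ℝ)) : Prop :=
  ∃ (N : ℕ) (T : Fin N → Set (Fin n → ℝ)),
    (∀ k, ∃ (m : ℕ) (P : Fin m → MvPolynomial (Fin n) ℝ) (Q : MvPolynomial (Fin n) ℝ),
      T k = {x | (∀ i, 0 < MvPolynomial.eval x (P i)) ∧ MvPolynomial.eval x Q = 0}) ∧
    S = ⋃ k, T k

/-- A function `f : ℝⁿ → ℝ` is semi-algebraic if its graph is a semi-algebraic subset
of `ℝ^(n+1)`. -/
def IsSemialgebraicFn {n : ℕ} (f : (Fin n → ℝ) → ℝ) : Prop :=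
  IsSemialgebraic {z : Fin (n + 1) → ℝ | ∃ x : Fin n → ℝ, z = Fin.snoc x (f x)}

/-- The distance from `x` to the set `C` measured in the norm `ν`. -/
noncomputable def distNu {E : Type*} [AddCommGroup E] (ν : E → ℝ) (C : Set E) (x : E) : ℝ :=
  sInf ((fun y => ν (x - y)) '' C)

/-- The dual norm `ν*(x) = max { yᵀ x : ν(y) ≤ 1 }`. -/
noncomputable def dualNu {n : ℕ} (ν : (Fin n → ℝ) → ℝ) (x : Fin n → ℝ) : ℝ :=
  sSup ((fun y => ∑ i, y i * x i) '' {y | ν y ≤ 1})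

/-!
The semi-algebraic half is quantifier elimination in one variable. Let `p` have maximal degree in a
finite family of polynomials. At a zero of another member `q`, the sign of `p` is that of the
combination of `p` and `q` in which the leading terms cancel, and between neighbouring zeros of `p'`
the polynomial `p` is monotone. So, while no leading coefficient vanishes, the sign diagram of the
family is determined by the one in which `p` is replaced by `p'` and these combinations, all of
smaller degree; a vanishing leading coefficient is simply erased. Both replacements decrease the
multiset of degrees in the Dershowitz–Manna order. Hence the truth of `∃ t, …` depends only on the
signs of finitely many polynomials in the coefficients.

As for the size of `S(C)`: at a functional that attains its norm at two unit vectors, the dual norm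
would have both vectors as its derivative. So smoothness of the dual norm makes `ν` strictly convex.
If `y` is a best approximation of `x`, then by strict convexity `y` is the only best approximation
of every point of the segment from `x` to `y` other than `x`. Hence `S(C)` has empty interior, and a
semi-algebraic set with empty interior satisfies a nontrivial polynomial equation.
-/

/-! ### Sign diagrams of real polynomials -/

section RealPolynomial

open Polynomial Filter Set SignType

theorem sign_eq_of_isPreconnected {X : Type*} [TopologicalSpace X] {s : Set X} {f : X → ℝ}
    (hs : IsPreconnected s) (hf : ContinuousOn f s) (h0 : ∀ x ∈ s, f x ≠ 0) {x y : X}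
    (hx : x ∈ s) (hy : y ∈ s) : sign (f x) = sign (f y) :=
  hs.constant_of_mapsTo .univ
    (fun z hz => (continuousAt_sign_of_ne_zero (h0 z hz)).comp_continuousWithinAt (hf z hz))
    (mapsTo_univ _ _) hx hy

theorem sign_eventuallyEq_of_isEquivalent {α : Type*} {l : Filter α} {u v : α → ℝ}
    (h : Asymptotics.IsEquivalent l u v) : ∀ᶠ x in l, sign (u x) = sign (v x) := by
  obtain ⟨w, hw, huv⟩ := h.exists_eq_mul
  filter_upwards [huv, hw.eventually (lt_mem_nhds zero_lt_one)] with x hx hpos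
  rw [hx, Pi.mul_apply, sign_mul, sign_pos hpos, one_mul]

theorem eventually_sign_eval_atTop (p : ℝ[X]) :
    ∀ᶠ y in atTop, sign (p.eval y) = sign p.leadingCoeff := by
  filter_upwards [sign_eventuallyEq_of_isEquivalent p.isEquivalent_atTop_lead,
    eventually_gt_atTop 0] with y hy hy0
  rw [hy, sign_mul, sign_pos (pow_pos hy0 _), mul_one]

theorem eventually_sign_eval_atBot (p : ℝ[X]) :
    ∀ᶠ y in atBot, sign (p.eval y) = sign (p.leadingCoeff * (-1) ^ p.natDegree) := by
  have h := tendsto_neg_atBot_atTop.eventually (eventually_sign_eval_atTop (p.comp (-X)))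
  have hX : (-X : ℝ[X]).natDegree ≠ 0 := by simp
  simpa [leadingCoeff_comp hX] using h

theorem exists_adjacent {Z : Set ℝ} (hZ : Z.Finite) {y : ℝ} (hy : y ∉ Z) (hl : ∃ a ∈ Z, a < y)
    (hu : ∃ b ∈ Z, y < b) : ∃ a ∈ Z, ∃ b ∈ Z, a < y ∧ y < b ∧ ∀ z ∈ Z, z ≤ a ∨ b ≤ z := by
  obtain ⟨a, ha⟩ := (hZ.inter_of_left (Iio y)).exists_maximal hl
  obtain ⟨b, hb⟩ := (hZ.inter_of_left (Ioi y)).exists_minimal hu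
  refine ⟨a, ha.prop.1, b, hb.prop.1, ha.prop.2, hb.prop.2, fun z hz => ?_⟩
  rcases lt_or_gt_of_ne (ne_of_mem_of_not_mem hz hy) with hlt | hlt
  exacts [Or.inl (not_lt.1 (ha.not_gt ⟨hz, hlt⟩)), Or.inr (not_lt.1 (hb.not_lt ⟨hz, hlt⟩))]

theorem exists_root_derivative_mem_Ioo {p : ℝ[X]} {a b : ℝ} (hab : a < b)
    (h : p.eval a = p.eval b) : ∃ c ∈ Ioo a b, p.derivative.eval c = 0 := by
  obtain ⟨c, hc, hc0⟩ := exists_deriv_eq_zero hab p.continuousOn h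
  exact ⟨c, hc, by rwa [← p.deriv]⟩

theorem injOn_eval_Icc {p : ℝ[X]} {a b : ℝ}
    (h : ∀ c ∈ Ioo a b, p.derivative.eval c ≠ 0) : InjOn (fun y => p.eval y) (Icc a b) := by
  have key : ∀ x ∈ Icc a b, ∀ y ∈ Icc a b, x < y → p.eval x ≠ p.eval y := by
    intro x hx y hy hxy he
    obtain ⟨c, hc, hc0⟩ := exists_root_derivative_mem_Ioo hxy he
    exact h c ⟨hx.1.trans_lt hc.1, hc.2.trans_le hy.2⟩ hc0
  intro x hx y hy he
  by_contra hne
  rcases lt_or_gt_of_ne hne with hlt | hlt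
  exacts [key x hx y hy hlt he, key y hy x hx hlt he.symm]

theorem exists_root_mem_Ioo_of_injOn {p q : ℝ[X]} {a b w a' b' : ℝ}
    (hinj : InjOn (fun y => p.eval y) (Icc a b)) (hwab : w ∈ Ioo a b) (hw : p.eval w = 0)
    (hab' : a' ≤ b') (ha : sign (p.eval a) = sign (q.eval a'))
    (hb : sign (p.eval b) = sign (q.eval b')) : ∃ w' ∈ Ioo a' b', q.eval w' = 0 := by
  have hab : a ≤ b := (hwab.1.trans hwab.2).le
  have haI : a ∈ Icc a b := left_mem_Icc.2 hab
  have hbI : b ∈ Icc a b := right_mem_Icc.2 hab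
  have hwI : w ∈ Icc a b := Ioo_subset_Icc_self hwab
  rcases p.continuousOn.strictMonoOn_of_injOn_Icc' hab hinj with hmono | hanti
  · have hpa : p.eval a < 0 := hw ▸ hmono haI hwI hwab.1
    have hpb : 0 < p.eval b := hw ▸ hmono hwI hbI hwab.2
    rw [sign_neg hpa, eq_comm, sign_eq_neg_one_iff] at ha
    rw [sign_pos hpb, eq_comm, sign_eq_one_iff] at hb
    exact intermediate_value_Ioo hab' q.continuousOn ⟨ha, hb⟩
  · have hpa : 0 < p.eval a := hw ▸ hanti haI hwI hwab.1
    have hpb : p.eval b < 0 := hw ▸ hanti hwI hbI hwab.2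
    rw [sign_pos hpa, eq_comm, sign_eq_one_iff] at ha
    rw [sign_neg hpb, eq_comm, sign_eq_neg_one_iff] at hb
    exact intermediate_value_Ioo' hab' q.continuousOn ⟨hb, ha⟩

theorem exists_orderIso_eqOn_Iic (g : ℝ ≃o ℝ) {c a b : ℝ} (hca : c < a) (hcb : g c < b) :
    ∃ g' : ℝ ≃o ℝ, EqOn g' g (Iic c) ∧ g' a = b := by
  set k := (b - g c) / (a - c) with hk
  have hk0 : 0 < k := div_pos (sub_pos.2 hcb) (sub_pos.2 hca)
  set u : ℝ → ℝ := fun y => if y ≤ c then g y else g c + k * (y - c) with hu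
  have hu_Iic : EqOn u g (Iic c) := fun y hy => if_pos hy
  have hu_Ici : EqOn u (fun y => g c + k * (y - c)) (Ici c) := by
    intro y hy
    rcases eq_or_lt_of_le (mem_Ici.1 hy) with rfl | hlt
    · simp [hu]
    · exact if_neg hlt.not_ge
  have hmono : StrictMono u := by
    refine StrictMonoOn.Iic_union_Ici (a := c) ((g.strictMono.strictMonoOn _).congr hu_Iic.symm)
      (StrictMonoOn.congr (fun y _ z _ hyz => ?_) hu_Ici.symm)
    exact add_lt_add_right (mul_lt_mul_of_pos_left (sub_lt_sub_right hyz c) hk0) _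
  have hsurj : Function.Surjective u := by
    intro y
    rcases le_total y (g c) with hy | hy
    · exact ⟨g.symm y, (hu_Iic (g.symm_apply_le.2 hy)).trans (g.apply_symm_apply y)⟩
    · refine ⟨c + (y - g c) / k, (hu_Ici ?_).trans ?_⟩
      · exact le_add_of_nonneg_right (div_nonneg (sub_nonneg.2 hy) hk0.le)
      · field_simp
        ring
  refine ⟨hmono.orderIsoOfSurjective u hsurj, hu_Iic, (hu_Ici hca.le).trans ?_⟩
  have : a - c ≠ 0 := (sub_pos.2 hca).ne'
  simp only [hk]
  field_simp
  ring

theorem exists_orderIso_eqOn (s : Finset ℝ) {f : ℝ → ℝ} (hf : StrictMonoOn f s) :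
    ∃ g : ℝ ≃o ℝ, EqOn g f s := by
  induction s using Finset.induction_on_max with
  | empty => exact ⟨OrderIso.refl ℝ, by simp⟩
  | insert a s ha ih =>
    rw [Finset.coe_insert] at hf ⊢
    rcases s.eq_empty_or_nonempty with rfl | hs
    · exact ⟨OrderIso.addRight (f a - a), by simp⟩
    obtain ⟨g, hg⟩ := ih (hf.mono (subset_insert _ _))
    have hm := s.max'_mem hs
    have hgm : g (s.max' hs) < f a :=
      hg hm ▸ hf (mem_insert_of_mem _ hm) (mem_insert _ _) (ha _ hm)
    obtain ⟨g', hg', hga⟩ := exists_orderIso_eqOn_Iic g (ha _ hm) hgm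
    refine ⟨g', ?_⟩
    rintro y (rfl | hy)
    exacts [hga, (hg' (s.le_max' y hy)).trans (hg hy)]

/-- A finite set of reals that contains the critical points of `p` and has points on both sides of
every root of `p`. Between neighbouring grid points `p` is monotone, so the signs of `p` on the grid
locate its roots. -/
structure IsCriticalGrid (Z : Set ℝ) (p : ℝ[X]) : Prop where
  finite : Z.Finite
  nonempty : Z.Nonempty
  mem_of_root_derivative : ∀ y, p.derivative.eval y = 0 → y ∈ Z
  exists_lt_root : ∀ y, p.eval y = 0 → ∃ a ∈ Z, a < y
  exists_root_lt : ∀ y, p.eval y = 0 → ∃ b ∈ Z, y < b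

namespace IsCriticalGrid

variable {Z : Set ℝ} {p q : ℝ[X]}

theorem ne_zero (hZ : IsCriticalGrid Z p) : p ≠ 0 := by
  rintro rfl
  obtain ⟨m, hm⟩ := hZ.finite.exists_minimal hZ.nonempty
  obtain ⟨a, ha, ham⟩ := hZ.exists_lt_root m eval_zero
  exact hm.not_lt ha ham

theorem exists_between (hZ : IsCriticalGrid Z p) {v w : ℝ} (hvw : v < w) (hv : p.eval v = 0)
    (hw : p.eval w = 0) : ∃ z ∈ Z, v < z ∧ z < w := by
  obtain ⟨c, hc, hc0⟩ := exists_root_derivative_mem_Ioo hvw (hv.trans hw.symm)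
  exact ⟨c, hZ.mem_of_root_derivative c hc0, hc⟩

theorem exists_forall_uIcc_ne_zero (hZ : IsCriticalGrid Z p) {y : ℝ} (hy : p.eval y ≠ 0) :
    ∃ z ∈ Z, ∀ w ∈ uIcc z y, p.eval w ≠ 0 := by
  by_contra! hroot
  have hyZ : y ∉ Z := fun h => by
    obtain ⟨w, hw, hw0⟩ := hroot y h
    rw [uIcc_self, mem_singleton_iff] at hw
    exact hy (hw ▸ hw0)
  have hlt : ∃ a ∈ Z, a < y := by
    by_contra! hge
    obtain ⟨m, hm⟩ := hZ.finite.exists_minimal hZ.nonempty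
    obtain ⟨w, hw, hw0⟩ := hroot m hm.prop
    obtain ⟨a, ha, haw⟩ := hZ.exists_lt_root w hw0
    exact hm.not_lt ha (haw.trans_le (hw.2.trans (sup_le le_rfl (hge m hm.prop))))
  have hgt : ∃ b ∈ Z, y < b := by
    by_contra! hle
    obtain ⟨m, hm⟩ := hZ.finite.exists_maximal hZ.nonempty
    obtain ⟨w, hw, hw0⟩ := hroot m hm.prop
    obtain ⟨b, hb, hwb⟩ := hZ.exists_root_lt w hw0
    exact hm.not_gt hb (((le_inf le_rfl (hle m hm.prop)).trans hw.1).trans_lt hwb)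
  obtain ⟨a, ha, b, hb, hay, hyb, hadj⟩ := exists_adjacent hZ.finite hyZ hlt hgt
  obtain ⟨v, hv, hv0⟩ := hroot a ha
  obtain ⟨w, hw, hw0⟩ := hroot b hb
  rw [uIcc_of_le hay.le] at hv
  rw [uIcc_of_ge hyb.le] at hw
  have hvy : v < y := lt_of_le_of_ne hv.2 fun h => hy (h ▸ hv0)
  have hyw : y < w := lt_of_le_of_ne hw.1 fun h => hy (h ▸ hw0)
  obtain ⟨z, hz, hvz, hzw⟩ := hZ.exists_between (hvy.trans hyw) hv0 hw0
  exact (hadj z hz).elim (hv.1.trans_lt hvz).not_ge (hzw.trans_le hw.2).not_ge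

variable {h : ℝ ≃o ℝ}

theorem exists_root_cmp_eq (hp : IsCriticalGrid Z p)
    (hpq : ∀ z ∈ Z, sign (p.eval z) = sign (q.eval (h z))) {w : ℝ} (hw : p.eval w = 0) :
    ∃ w', q.eval w' = 0 ∧ ∀ z ∈ Z, cmp z w = cmp (h z) w' := by
  by_cases hwZ : w ∈ Z
  · have hsign := hpq w hwZ
    rw [hw, sign_zero, eq_comm, sign_eq_zero_iff] at hsign
    exact ⟨h w, hsign, fun z _ => (h.strictMono.cmp_map_eq z w).symm⟩
  obtain ⟨a, ha, b, hb, haw, hwb, hadj⟩ :=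
    exists_adjacent hp.finite hwZ (hp.exists_lt_root w hw) (hp.exists_root_lt w hw)
  have hinj : InjOn (fun y => p.eval y) (Icc a b) := injOn_eval_Icc fun c hc hc0 =>
    (hadj c (hp.mem_of_root_derivative c hc0)).elim hc.1.not_ge hc.2.not_ge
  obtain ⟨w', hw', hw'0⟩ := exists_root_mem_Ioo_of_injOn hinj ⟨haw, hwb⟩ hw
    (h.monotone (haw.trans hwb).le) (hpq a ha) (hpq b hb)
  refine ⟨w', hw'0, fun z hz => ?_⟩
  rcases hadj z hz with hza | hbz
  · rw [(hza.trans_lt haw).cmp_eq_lt, ((h.monotone hza).trans_lt hw'.1).cmp_eq_lt]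
  · rw [(hwb.trans_le hbz).cmp_eq_gt, (hw'.2.trans_le (h.monotone hbz)).cmp_eq_gt]

theorem exists_orderIso_root (hp : IsCriticalGrid Z p)
    (hpq : ∀ z ∈ Z, sign (p.eval z) = sign (q.eval (h z))) :
    ∃ g : ℝ ≃o ℝ, EqOn g h Z ∧ ∀ w, p.eval w = 0 → q.eval (g w) = 0 := by
  have hfin : (Z ∪ {w | p.eval w = 0}).Finite :=
    hp.finite.union (finite_setOfPred_isRoot hp.ne_zero)
  have hex : ∀ w, ∃ w', (p.eval w = 0 → q.eval w' = 0) ∧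
      (w ∈ Z ∪ {w | p.eval w = 0} → ∀ z ∈ Z, cmp z w = cmp (h z) w') := by
    intro w
    by_cases hw : p.eval w = 0
    · obtain ⟨w', hw', hcmp⟩ := hp.exists_root_cmp_eq hpq hw
      exact ⟨w', fun _ => hw', fun _ => hcmp⟩
    · exact ⟨h w, fun h0 => absurd h0 hw, fun _ z _ => (h.strictMono.cmp_map_eq z w).symm⟩
  choose f hf0 hf using hex
  have hfh : EqOn f h Z := fun z hz =>
    ((eq_iff_eq_of_cmp_eq_cmp (hf z (Or.inl hz) z hz)).1 rfl).symm
  have hsep : ∀ v ∈ Z ∪ {w | p.eval w = 0}, ∀ w ∈ Z ∪ {w | p.eval w = 0}, v < w →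
      ∃ z ∈ Z, v ≤ z ∧ z ≤ w := by
    rintro v (hv | hv) w (hw | hw) hvw
    exacts [⟨v, hv, le_rfl, hvw.le⟩, ⟨v, hv, le_rfl, hvw.le⟩, ⟨w, hw, hvw.le, le_rfl⟩,
      (hp.exists_between hvw hv hw).imp fun z hz => ⟨hz.1, hz.2.1.le, hz.2.2.le⟩]
  have hmono : StrictMonoOn f (Z ∪ {w | p.eval w = 0}) := by
    intro v hv w hw hvw
    obtain ⟨z, hz, hvz, hzw⟩ := hsep v hv w hw hvw
    have hcv := cmp_eq_cmp_symm.1 (hf v hv z hz)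
    rcases hvz.lt_or_eq with hvz' | rfl
    · exact ((lt_iff_lt_of_cmp_eq_cmp hcv).1 hvz').trans_le
        ((le_iff_le_of_cmp_eq_cmp (hf w hw z hz)).1 hzw)
    · exact hfh hz ▸ (lt_iff_lt_of_cmp_eq_cmp (hf w hw v hz)).1 hvw
  obtain ⟨g, hg⟩ := exists_orderIso_eqOn hfin.toFinset (by rwa [hfin.coe_toFinset])
  rw [hfin.coe_toFinset] at hg
  exact ⟨g, fun z hz => (hg (Or.inl hz)).trans (hfh hz), fun w hw => (hg (Or.inr hw)) ▸ hf0 w hw⟩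

theorem exists_orderIso_sign_eval_eq (hp : IsCriticalGrid Z p) (hq : IsCriticalGrid (h '' Z) q)
    (hpq : ∀ z ∈ Z, sign (p.eval z) = sign (q.eval (h z))) :
    ∃ g : ℝ ≃o ℝ, EqOn g h Z ∧ ∀ y, sign (p.eval y) = sign (q.eval (g y)) := by
  obtain ⟨g, hgh, hg0⟩ := hp.exists_orderIso_root hpq
  have hroot : ∀ y, q.eval (g y) = 0 → p.eval y = 0 := by
    intro y hy
    obtain ⟨w, hw0, hw⟩ := hq.exists_root_cmp_eq (h := h.symm) (q := p)
      (by rintro _ ⟨z, hz, rfl⟩; rw [h.symm_apply_apply, hpq z hz]) hy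
    suffices g w = g y from g.injective this ▸ hw0
    have key : ∀ z ∈ Z, cmp (h z) (g y) = cmp (h z) (g w) := fun z hz => by
      rw [hw _ (mem_image_of_mem h hz), h.symm_apply_apply, ← hgh hz, g.strictMono.cmp_map_eq]
    by_contra hne
    rcases lt_or_gt_of_ne hne with hlt | hlt
    · obtain ⟨_, ⟨z, hz, rfl⟩, h1, h2⟩ := hq.exists_between hlt (hg0 w hw0) hy
      exact h1.not_gt ((lt_iff_lt_of_cmp_eq_cmp (key z hz)).1 h2)
    · obtain ⟨_, ⟨z, hz, rfl⟩, h1, h2⟩ := hq.exists_between hlt hy (hg0 w hw0)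
      exact h2.not_gt ((lt_iff_lt_of_cmp_eq_cmp (cmp_eq_cmp_symm.1 (key z hz))).1 h1)
  refine ⟨g, hgh, fun y => ?_⟩
  by_cases hy : p.eval y = 0
  · rw [hy, hg0 y hy]
  obtain ⟨z, hz, hzy⟩ := hp.exists_forall_uIcc_ne_zero hy
  calc sign (p.eval y) = sign (p.eval z) :=
        sign_eq_of_isPreconnected isPreconnected_uIcc p.continuousOn hzy right_mem_uIcc
          left_mem_uIcc
    _ = sign (q.eval (g z)) := by rw [hpq z hz, hgh hz]
    _ = sign (q.eval (g y)) :=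
        sign_eq_of_isPreconnected (f := fun w => q.eval (g w)) isPreconnected_uIcc
          (q.continuous.comp g.continuous).continuousOn (fun w hw hw0 => hzy w hw (hroot w hw0))
          left_mem_uIcc right_mem_uIcc

end IsCriticalGrid

theorem isCriticalGrid_insert {p : ℝ[X]} {Z : Set ℝ} {a b : ℝ} (hZ : Z.Finite)
    (hZp : ∀ y, p.derivative.eval y = 0 → y ∈ Z) (ha : ∀ y ≤ a, p.eval y ≠ 0)
    (hb : ∀ y ≥ b, p.eval y ≠ 0) : IsCriticalGrid (insert a (insert b Z)) p where
  finite := (hZ.insert b).insert a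
  nonempty := insert_nonempty _ _
  mem_of_root_derivative y hy := Or.inr (Or.inr (hZp y hy))
  exists_lt_root y hy := ⟨a, Or.inl rfl, not_le.1 fun h => ha y h hy⟩
  exists_root_lt y hy := ⟨b, Or.inr (Or.inl rfl), not_le.1 fun h => hb y h hy⟩

theorem exists_orderIso_sign_eval_eq {p q : ℝ[X]} (h : ℝ ≃o ℝ) {Z : Set ℝ} (hZ : Z.Finite)
    (hp0 : p ≠ 0) (hdeg : p.natDegree = q.natDegree)
    (hlc : sign p.leadingCoeff = sign q.leadingCoeff)
    (hZp : ∀ y, p.derivative.eval y = 0 → y ∈ Z)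
    (hZq : ∀ y, q.derivative.eval (h y) = 0 → y ∈ Z)
    (hpq : ∀ z ∈ Z, sign (p.eval z) = sign (q.eval (h z))) :
    ∃ g : ℝ ≃o ℝ, EqOn g h Z ∧ ∀ y, sign (p.eval y) = sign (q.eval (g y)) := by
  have hlc0 : p.leadingCoeff ≠ 0 := leadingCoeff_ne_zero.2 hp0
  obtain ⟨b, hb⟩ := eventually_atTop.1 ((eventually_sign_eval_atTop p).and
    (h.tendsto_atTop.eventually (eventually_sign_eval_atTop q)))
  obtain ⟨a, ha⟩ := eventually_atBot.1 ((eventually_sign_eval_atBot p).and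
    (h.tendsto_atBot.eventually (eventually_sign_eval_atBot q)))
  rw [← hlc] at hb
  rw [← hdeg, sign_mul q.leadingCoeff, ← hlc, ← sign_mul] at ha
  have hlc0' : p.leadingCoeff * (-1) ^ p.natDegree ≠ 0 :=
    mul_ne_zero hlc0 (pow_ne_zero _ (by norm_num))
  have hp : IsCriticalGrid (insert a (insert b Z)) p :=
    isCriticalGrid_insert hZ hZp
      (fun y hy => sign_ne_zero.1 ((ha y hy).1 ▸ sign_ne_zero.2 hlc0'))
      (fun y hy => sign_ne_zero.1 ((hb y hy).1 ▸ sign_ne_zero.2 hlc0))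
  have hq : IsCriticalGrid (h '' insert a (insert b Z)) q := by
    rw [image_insert_eq, image_insert_eq]
    refine isCriticalGrid_insert (hZ.image h)
      (fun y hy => ⟨h.symm y, hZq _ (by rwa [h.apply_symm_apply]), h.apply_symm_apply y⟩)
      (fun y hy => ?_) (fun y hy => ?_)
    · rw [← h.apply_symm_apply y, ← sign_ne_zero, (ha _ (h.symm_apply_le.2 hy)).2]
      exact sign_ne_zero.2 hlc0'
    · rw [← h.apply_symm_apply y, ← sign_ne_zero, (hb _ (h.le_symm_apply.2 hy)).2]
      exact sign_ne_zero.2 hlc0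
  obtain ⟨g, hgh, hg⟩ := hp.exists_orderIso_sign_eval_eq hq (by
    rintro z (rfl | rfl | hz)
    exacts [(ha z le_rfl).1.trans (ha z le_rfl).2.symm, (hb z le_rfl).1.trans (hb z le_rfl).2.symm,
      hpq z hz])
  exact ⟨g, hgh.mono ((subset_insert _ _).trans (subset_insert _ _)), hg⟩

end RealPolynomial

/-! ### Elimination of one variable -/

section Elimination

open Polynomial Set SignType

theorem sign_eq_of_eqOn_zeros {f f' : ℝ → ℝ} (hf' : Continuous f') {g h : ℝ ≃o ℝ}
    (hh : ∀ y, sign (f y) = sign (f' (h y))) (hgh : ∀ y, f y = 0 → g y = h y) (y : ℝ) :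
    sign (f y) = sign (f' (g y)) := by
  have hzero : ∀ w, f w = 0 ↔ f' (h w) = 0 := fun w => by
    rw [← sign_eq_zero_iff, hh, sign_eq_zero_iff]
  by_cases hy : f y = 0
  · rw [hh, hgh y hy]
  rw [hh]
  refine sign_eq_of_isPreconnected isPreconnected_uIcc hf'.continuousOn (fun v hv hv0 => ?_)
    left_mem_uIcc right_mem_uIcc
  obtain ⟨w, rfl⟩ := h.surjective v
  have hw0 := (hzero w).2 hv0
  have hwg := hgh w hw0
  rcases lt_trichotomy w y with hlt | rfl | hlt
  · exact (lt_inf_iff.2 ⟨h.strictMono hlt, hwg ▸ g.strictMono hlt⟩).not_ge hv.1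
  · exact hy hw0
  · exact (sup_lt_iff.2 ⟨h.strictMono hlt, hwg ▸ g.strictMono hlt⟩).not_ge hv.2

variable {R : Type*} [CommRing R] {φ φ' : R →+* ℝ}

/-- The families obtained from `F` by specialising coefficients along `φ` and along `φ'` have the
same sign diagram: an increasing bijection of the line matches their signs pointwise. -/
def SameSignPattern (F : Multiset R[X]) (φ φ' : R →+* ℝ) : Prop :=
  ∃ h : ℝ ≃o ℝ, ∀ f ∈ F, ∀ y, sign ((f.map φ).eval y) = sign ((f.map φ').eval (h y))

theorem eval_map_cancelLeads_of_root {p q : R[X]} (hdeg : q.natDegree ≤ p.natDegree) {y : ℝ}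
    (hy : (q.map φ).eval y = 0) :
    ((q.cancelLeads p).map φ).eval y = φ q.leadingCoeff * (p.map φ).eval y := by
  simp [cancelLeads, hy, Nat.sub_eq_zero_of_le hdeg]

theorem sign_eval_eq_of_cancelLeads {p q : R[X]} (hdeg : q.natDegree ≤ p.natDegree) {y y' : ℝ}
    (hlc0 : φ q.leadingCoeff ≠ 0) (hlc : sign (φ q.leadingCoeff) = sign (φ' q.leadingCoeff))
    (hy : (q.map φ).eval y = 0) (hy' : (q.map φ').eval y' = 0)
    (h : sign (((q.cancelLeads p).map φ).eval y) = sign (((q.cancelLeads p).map φ').eval y')) :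
    sign ((p.map φ).eval y) = sign ((p.map φ').eval y') := by
  rw [eval_map_cancelLeads_of_root hdeg hy, eval_map_cancelLeads_of_root hdeg hy', sign_mul,
    sign_mul, ← hlc] at h
  exact mul_left_cancel₀ (sign_ne_zero.2 hlc0) h

theorem map_eraseLead_of_map_leadingCoeff_eq_zero {f : R[X]} (hf : φ f.leadingCoeff = 0) :
    f.eraseLead.map φ = f.map φ := by
  conv_rhs =>
    rw [← f.eraseLead_add_C_mul_X_pow, Polynomial.map_add, Polynomial.map_mul, map_C, hf, C_0,
      zero_mul, add_zero]

namespace SameSignPattern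

theorem of_forall_natDegree_eq_zero {F : Multiset R[X]} (hdeg : ∀ f ∈ F, f.natDegree = 0)
    (hlc : ∀ f ∈ F, sign (φ f.leadingCoeff) = sign (φ' f.leadingCoeff)) :
    SameSignPattern F φ φ' := by
  refine ⟨OrderIso.refl ℝ, fun f hf y => ?_⟩
  have h := hlc f hf
  rw [eq_C_of_natDegree_eq_zero (hdeg f hf)] at h ⊢
  simpa using h

theorem of_eraseLead {f : R[X]} {T : Multiset R[X]} (hf : φ f.leadingCoeff = 0)
    (hf' : φ' f.leadingCoeff = 0) (h : SameSignPattern (T + {f.eraseLead}) φ φ') :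
    SameSignPattern (f ::ₘ T) φ φ' := by
  obtain ⟨h, hh⟩ := h
  refine ⟨h, fun q hq => ?_⟩
  rcases Multiset.mem_cons.1 hq with rfl | hqT
  · simpa only [map_eraseLead_of_map_leadingCoeff_eq_zero hf,
      map_eraseLead_of_map_leadingCoeff_eq_zero hf'] using hh q.eraseLead (by simp)
  · exact hh q (Multiset.mem_add.2 (Or.inl hqT))

theorem mono {F G : Multiset R[X]} (h : SameSignPattern G φ φ') (hFG : F ⊆ G) :
    SameSignPattern F φ φ' :=
  h.imp fun _ hh f hf => hh f (hFG hf)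

theorem zero_cons {T : Multiset R[X]} (h : SameSignPattern T φ φ') :
    SameSignPattern (0 ::ₘ T) φ φ' := by
  obtain ⟨h, hh⟩ := h
  refine ⟨h, fun q hq => ?_⟩
  rcases Multiset.mem_cons.1 hq with rfl | hqT
  exacts [fun y => by simp, hh q hqT]

theorem cons_of_cancelLeads {p : R[X]} {T : Multiset R[X]}
    (hdeg : ∀ q ∈ T, q.natDegree ≤ p.natDegree) (hp' : derivative p ∈ T)
    (hlc0 : ∀ q ∈ p ::ₘ T, φ q.leadingCoeff ≠ 0)
    (hlc : ∀ q ∈ p ::ₘ T, sign (φ q.leadingCoeff) = sign (φ' q.leadingCoeff))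
    (h : SameSignPattern (T + T.map (·.cancelLeads p)) φ φ') :
    SameSignPattern (p ::ₘ T) φ φ' := by
  obtain ⟨h, hh⟩ := h
  rw [Multiset.forall_mem_cons] at hlc0 hlc
  have hT : ∀ q ∈ T, ∀ y, sign ((q.map φ).eval y) = sign ((q.map φ').eval (h y)) :=
    fun q hq => hh q (Multiset.mem_add.2 (Or.inl hq))
  have hcancel : ∀ q ∈ T, ∀ y, sign (((q.cancelLeads p).map φ).eval y) =
      sign (((q.cancelLeads p).map φ').eval (h y)) :=
    fun q hq => hh _ (Multiset.mem_add.2 (Or.inr (Multiset.mem_map_of_mem _ hq)))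
  have hroot : ∀ q ∈ T, ∀ y, (q.map φ).eval y = 0 ↔ (q.map φ').eval (h y) = 0 :=
    fun q hq y => by rw [← sign_eq_zero_iff, hT q hq y, sign_eq_zero_iff]
  have hlc0p' : φ' p.leadingCoeff ≠ 0 := sign_ne_zero.1 (hlc.1 ▸ sign_ne_zero.2 hlc0.1)
  have hmap0 : ∀ {q : R[X]}, φ q.leadingCoeff ≠ 0 → q.map φ ≠ 0 := fun hq h0 =>
    hq (by rw [← coeff_natDegree, ← coeff_map, h0, coeff_zero])
  have hfin : {y | ∃ q ∈ T, (q.map φ).eval y = 0}.Finite :=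
    (T.finite_toSet.biUnion fun q hq => finite_setOfPred_isRoot (hmap0 (hlc0.2 q hq))).subset
      fun y ⟨q, hq, hy⟩ => mem_biUnion hq hy
  obtain ⟨g, hgh, hg⟩ := exists_orderIso_sign_eval_eq (p := p.map φ) (q := p.map φ') h hfin
    (hmap0 hlc0.1)
    (by rw [natDegree_map_of_leadingCoeff_ne_zero _ hlc0.1,
          natDegree_map_of_leadingCoeff_ne_zero _ hlc0p'])
    (by rw [leadingCoeff_map_of_leadingCoeff_ne_zero _ hlc0.1,
          leadingCoeff_map_of_leadingCoeff_ne_zero _ hlc0p', hlc.1])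
    (fun y hy => ⟨_, hp', by rwa [← derivative_map]⟩)
    (fun y hy => ⟨_, hp', (hroot _ hp' y).2 (by rwa [← derivative_map])⟩)
    (fun z ⟨q, hq, hz⟩ => sign_eval_eq_of_cancelLeads (hdeg q hq) (hlc0.2 q hq) (hlc.2 q hq) hz
      ((hroot q hq z).1 hz) (hcancel q hq z))
  refine ⟨g, Multiset.forall_mem_cons.2 ⟨hg, fun q hq => ?_⟩⟩
  exact sign_eq_of_eqOn_zeros (q.map φ').continuous (hT q hq) fun y hy => hgh ⟨q, hq, hy⟩

theorem of_derivative_of_cancelLeads [IsAddTorsionFree R] {p : R[X]} {T : Multiset R[X]}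
    (hp : p.natDegree ≠ 0) (hdeg : ∀ q ∈ T, q.natDegree ≤ p.natDegree)
    (hlc0 : ∀ q ∈ p ::ₘ T, φ q.leadingCoeff ≠ 0)
    (hlc : ∀ q ∈ p ::ₘ T, sign (φ q.leadingCoeff) = sign (φ' q.leadingCoeff))
    (h : SameSignPattern
      (T + (derivative p ::ₘ (derivative p ::ₘ T).map (·.cancelLeads p))) φ φ') :
    SameSignPattern (p ::ₘ T) φ φ' := by
  have hp0 := hlc0 p (Multiset.mem_cons_self p T)
  have hps := hlc p (Multiset.mem_cons_self p T)
  rw [Multiset.add_cons, ← Multiset.cons_add] at h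
  refine (cons_of_cancelLeads ?_ (Multiset.mem_cons_self _ T) ?_ ?_ h).mono
    (Multiset.cons_subset_cons (Multiset.subset_cons T _))
  · exact Multiset.forall_mem_cons.2 ⟨(natDegree_derivative_lt hp).le, hdeg⟩
  · rw [Multiset.cons_swap]
    refine Multiset.forall_mem_cons.2 ⟨?_, hlc0⟩
    rw [leadingCoeff_derivative, map_mul, map_natCast]
    exact mul_ne_zero hp0 (Nat.cast_ne_zero.2 hp)
  · rw [Multiset.cons_swap]
    refine Multiset.forall_mem_cons.2 ⟨?_, hlc⟩
    rw [leadingCoeff_derivative, map_mul φ, map_mul φ', map_natCast, map_natCast, sign_mul,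
      sign_mul, hps]

end SameSignPattern

/-- The sign diagram of a specialisation of `F` is determined by the signs that finitely many
elements of the coefficient ring take under it. This is elimination of one real quantifier, stated
without a syntax of formulas. -/
def HasFiniteSignCriterion (F : Multiset R[X]) : Prop :=
  ∃ G : Finset R, ∀ φ φ' : R →+* ℝ, (∀ g ∈ G, sign (φ g) = sign (φ' g)) → SameSignPattern F φ φ'

theorem multiset_induction_replace {α β : Type*} [Preorder β] [WellFoundedLT β] (μ : α → β)
    {P : Multiset α → Prop}
    (step : ∀ F, (∀ a T B, F = a ::ₘ T → (∀ b ∈ B, μ b < μ a) → P (T + B)) → P F)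
    (F : Multiset α) : P F := by
  refine (InvImage.wf (Multiset.map μ) Multiset.wellFounded_isDershowitzMannaLT).induction F
    fun F ih => step F fun a T B hF hB => ih _ ⟨T.map μ, B.map μ, {μ a}, ?_, ?_, ?_, ?_⟩
  · exact Multiset.singleton_ne_zero _
  · exact Multiset.map_add μ T B
  · rw [hF, Multiset.map_cons, ← Multiset.singleton_add, add_comm]
  · simpa using hB

theorem exists_finset_sameSignPattern_of_leadingCoeff_ne_zero [IsAddTorsionFree R]
    {F : Multiset R[X]} (ih : ∀ p T B, F = p ::ₘ T → (∀ q ∈ B, q.degree < p.degree) →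
      HasFiniteSignCriterion (T + B)) :
    ∃ G : Finset R, ∀ φ φ' : R →+* ℝ, (∀ g ∈ G, sign (φ g) = sign (φ' g)) →
      (∀ f ∈ F, φ f.leadingCoeff ≠ 0) →
      (∀ f ∈ F, sign (φ f.leadingCoeff) = sign (φ' f.leadingCoeff)) → SameSignPattern F φ φ' := by
  classical
  by_cases! hconst : ∀ f ∈ F, f.natDegree = 0
  · exact ⟨∅, fun φ φ' _ _ => .of_forall_natDegree_eq_zero hconst⟩
  obtain ⟨f, hf, hf0⟩ := hconst
  obtain ⟨p, hp, hmax⟩ := F.toFinset.exists_max_image natDegree ⟨f, Multiset.mem_toFinset.2 hf⟩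
  simp only [Multiset.mem_toFinset] at hp hmax
  have hp0 : 0 < p.natDegree := hf0.bot_lt.trans_le (hmax f hf)
  obtain ⟨T, rfl⟩ := Multiset.exists_cons_of_mem hp
  have hT := (Multiset.forall_mem_cons.1 hmax).2
  have hp' := natDegree_derivative_lt hp0.ne'
  have hcancel : ∀ q ∈ derivative p ::ₘ T, (q.cancelLeads p).degree < p.degree := fun q hq =>
    degree_lt_degree <| natDegree_cancelLeads_lt_of_natDegree_le_natDegree
      ((Multiset.mem_cons.1 hq).elim (fun h => h ▸ hp'.le) (hT q)) hp0
  obtain ⟨G, hG⟩ := ih p T (derivative p ::ₘ (derivative p ::ₘ T).map (·.cancelLeads p)) rfl <|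
    Multiset.forall_mem_cons.2 ⟨degree_lt_degree hp', Multiset.forall_mem_map_iff.2 hcancel⟩
  exact ⟨G, fun φ φ' h hlc0 hlc => .of_derivative_of_cancelLeads hp0.ne' hT hlc0 hlc (hG φ φ' h)⟩

theorem hasFiniteSignCriterion [IsAddTorsionFree R] (F : Multiset R[X]) :
    HasFiniteSignCriterion F := by
  classical
  induction F using multiset_induction_replace degree with | step F ih
  by_cases h0 : 0 ∈ F
  · obtain ⟨T, rfl⟩ := Multiset.exists_cons_of_mem h0
    obtain ⟨G, hG⟩ := ih 0 T 0 rfl (by simp)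
    exact ⟨G, fun φ φ' h => .zero_cons (by simpa using hG φ φ' h)⟩
  have hdrop : ∀ f ∈ F, HasFiniteSignCriterion (F.erase f + {f.eraseLead}) := fun f hf =>
    ih f _ _ (Multiset.cons_erase hf).symm <| by
      simpa using degree_eraseLead_lt (ne_of_mem_of_not_mem hf h0)
  choose! D hD using hdrop
  obtain ⟨K, hK⟩ := exists_finset_sameSignPattern_of_leadingCoeff_ne_zero ih
  refine ⟨(F.map leadingCoeff).toFinset ∪ K ∪ F.toFinset.biUnion D, fun φ φ' h => ?_⟩
  simp only [Finset.forall_mem_union, Multiset.mem_toFinset, Multiset.forall_mem_map_iff,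
    Finset.mem_biUnion, forall_exists_index, and_imp] at h
  obtain ⟨⟨hlc, hsK⟩, hsD⟩ := h
  by_cases! hlc0 : ∀ f ∈ F, φ f.leadingCoeff ≠ 0
  · exact hK φ φ' hsK hlc0 hlc
  obtain ⟨f, hf, hf0⟩ := hlc0
  have hf0' : φ' f.leadingCoeff = 0 := by rw [← sign_eq_zero_iff, ← hlc f hf, hf0, sign_zero]
  rw [← Multiset.cons_erase hf]
  exact .of_eraseLead hf0 hf0' (hD f hf φ φ' fun g hg => hsD g f hf hg)

end Elimination

/-! ### Semi-algebraic sets -/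

section SignDetermined

open MvPolynomial Set SignType

variable {σ τ : Type*}

/-- Membership in `A` depends only on the signs of finitely many polynomials. For `σ = Fin n` these
are the semi-algebraic sets; this form needs no normal form and so makes Boolean operations and
projections easy. -/
def IsSignDetermined (A : Set (σ → ℝ)) : Prop :=
  ∃ F : Finset (MvPolynomial σ ℝ), ∀ x y,
    (∀ f ∈ F, sign (eval x f) = sign (eval y f)) → x ∈ A → y ∈ A

namespace IsSignDetermined

variable {A B : Set (σ → ℝ)}

theorem compl (hA : IsSignDetermined A) : IsSignDetermined Aᶜ :=
  hA.imp fun _ hF x y hxy hx hy => hx (hF y x (fun f hf => (hxy f hf).symm) hy)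

theorem iUnion {ι : Type*} [Finite ι] {A : ι → Set (σ → ℝ)} (hA : ∀ i, IsSignDetermined (A i)) :
    IsSignDetermined (⋃ i, A i) := by
  classical
  cases nonempty_fintype ι
  choose F hF using hA
  refine ⟨Finset.univ.biUnion F, fun x y hxy hx => ?_⟩
  obtain ⟨i, hi⟩ := mem_iUnion.1 hx
  exact mem_iUnion.2 ⟨i, hF i x y
    (fun f hf => hxy f (Finset.mem_biUnion.2 ⟨i, Finset.mem_univ i, hf⟩)) hi⟩

theorem union (hA : IsSignDetermined A) (hB : IsSignDetermined B) : IsSignDetermined (A ∪ B) := by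
  rw [union_eq_iUnion]
  exact iUnion (Bool.rec hB hA)

theorem inter (hA : IsSignDetermined A) (hB : IsSignDetermined B) : IsSignDetermined (A ∩ B) := by
  simpa only [compl_union, compl_compl] using (hA.compl.union hB.compl).compl

theorem imp (hA : IsSignDetermined A) (hB : IsSignDetermined B) :
    IsSignDetermined {x | x ∈ A → x ∈ B} := by
  simp only [imp_iff_not_or]
  exact hA.compl.union hB

theorem setOf_eval_eq_zero (f : MvPolynomial σ ℝ) : IsSignDetermined {x | eval x f = 0} :=
  ⟨{f}, fun x y hxy hx => by
    rw [mem_ofPred_eq, ← sign_eq_zero_iff, ← hxy f (Finset.mem_singleton_self f)]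
    exact sign_eq_zero_iff.2 hx⟩

theorem setOf_eval_pos (f : MvPolynomial σ ℝ) : IsSignDetermined {x | 0 < eval x f} :=
  ⟨{f}, fun x y hxy hx => by
    rw [mem_ofPred_eq, ← sign_eq_one_iff, ← hxy f (Finset.mem_singleton_self f)]
    exact sign_eq_one_iff.2 hx⟩

theorem setOf_apply_le (a b : σ) : IsSignDetermined {x : σ → ℝ | x a ≤ x b} := by
  convert (setOf_eval_pos (X a - X b)).compl
  ext x
  simp only [mem_compl_iff, mem_ofPred_eq, map_sub, eval_X, sub_pos, not_lt]

theorem setOf_comp_eq [Finite τ] (a b : τ → σ) :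
    IsSignDetermined {x : σ → ℝ | x ∘ a = x ∘ b} := by
  have h : {x : σ → ℝ | x ∘ a = x ∘ b} =
      (⋃ i, {x : σ → ℝ | eval x (X (a i) - X (b i)) = 0}ᶜ)ᶜ := by
    ext x
    simp [funext_iff, sub_eq_zero]
  exact h ▸ (iUnion fun i => (setOf_eval_eq_zero _).compl).compl

theorem preimage_eval {A : Set (τ → ℝ)} (hA : IsSignDetermined A) (g : τ → MvPolynomial σ ℝ) :
    IsSignDetermined {x | (fun i => eval x (g i)) ∈ A} := by
  classical
  obtain ⟨F, hF⟩ := hA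
  refine ⟨F.image (bind₁ g), fun x y hxy => hF _ _ fun f hf => ?_⟩
  have h := hxy _ (Finset.mem_image_of_mem _ hf)
  simpa only [eval, eval₂Hom_bind₁] using h

theorem preimage_comp {A : Set (τ → ℝ)} (hA : IsSignDetermined A) (e : τ → σ) :
    IsSignDetermined {x : σ → ℝ | x ∘ e ∈ A} := by
  simpa only [eval_X, Function.comp_def] using hA.preimage_eval fun i => X (e i)

theorem exists_option_elim {A : Set (Option σ → ℝ)} (hA : IsSignDetermined A) :
    IsSignDetermined {x : σ → ℝ | ∃ t : ℝ, (fun o => Option.elim o t x) ∈ A} := by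
  obtain ⟨F, hF⟩ := hA
  obtain ⟨G, hG⟩ := hasFiniteSignCriterion (F.val.map (optionEquivLeft ℝ σ))
  refine ⟨G, fun x y hxy ⟨t, ht⟩ => ?_⟩
  obtain ⟨h, hh⟩ := hG (eval x) (eval y) hxy
  refine ⟨h t, hF _ _ (fun f hf => ?_) ht⟩
  rw [optionEquivLeft_elim_eval, optionEquivLeft_elim_eval]
  exact hh _ (Multiset.mem_map_of_mem _ hf) t

theorem exists_block [Finite τ] {P : (σ → ℝ) → (τ → ℝ) → Prop}
    (hP : IsSignDetermined {w : σ ⊕ τ → ℝ | P (w ∘ Sum.inl) (w ∘ Sum.inr)}) :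
    IsSignDetermined {x | ∃ z, P x z} := by
  induction τ using Finite.induction_empty_option with
  | of_equiv e ih =>
    have h := ih (P := fun x z => P x (z ∘ e.symm)) (hP.preimage_comp (Sum.map id e.symm))
    have h_reindex (x) : (∃ z, P x (z ∘ e.symm)) ↔ ∃ z, P x z :=
      (e.arrowCongr (Equiv.refl ℝ)).surjective.exists.symm
    simpa only [h_reindex] using h
  | h_empty =>
    have h_unique (x) : (∃ z, P x z) ↔ P x ((x ∘ Equiv.sumEmpty σ PEmpty) ∘ Sum.inr) := by
      rw [Unique.exists_iff, Unique.eq_default (_ ∘ Sum.inr)]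
    simp only [h_unique]
    exact hP.preimage_comp (Equiv.sumEmpty σ PEmpty)
  | @h_option τ _ ih =>
    let e : σ ⊕ Option τ → Option (σ ⊕ τ) :=
      Sum.elim (some ∘ Sum.inl) (Option.map Sum.inr)
    have h := ih (P := fun x z => ∃ t : ℝ, P x fun o => o.elim t z)
      (by
        have h_cons (w : σ ⊕ τ → ℝ) (t : ℝ) :
            (fun o => (e o).elim t w) ∘ Sum.inr = fun o => Option.elim o t (w ∘ Sum.inr) := by
          funext o
          cases o <;> rfl
        simp only [← h_cons]
        exact (hP.preimage_comp e).exists_option_elim)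
    have h_uncons (x) : (∃ z, ∃ t : ℝ, P x fun o => o.elim t z) ↔ ∃ z, P x z := by
      refine ⟨fun ⟨z, t, h⟩ => ⟨_, h⟩, fun ⟨z, h⟩ => ⟨z ∘ some, z none, ?_⟩⟩
      convert h with o
      cases o <;> rfl
    simpa only [h_uncons] using h

theorem forall_block [Finite τ] {P : (σ → ℝ) → (τ → ℝ) → Prop}
    (hP : IsSignDetermined {w : σ ⊕ τ → ℝ | P (w ∘ Sum.inl) (w ∘ Sum.inr)}) :
    IsSignDetermined {x | ∀ z, P x z} := by
  have h := (exists_block (P := fun x z => ¬ P x z) hP.compl).compl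
  simpa only [compl_ofPred, not_exists, not_not] using h

end IsSignDetermined

-- One inequality and one equation serve all three signs: for `s = 0` the inequality reads `0 < 1`,
-- for `s = ±1` the equation reads `0 = 0`.
theorem sign_eq_iff_pos_and_eq_zero (a : ℝ) (s : SignType) :
    sign a = s ↔ 0 < s * a + (1 - (s : ℝ) ^ 2) ∧ (1 - (s : ℝ) ^ 2) * a ^ 2 = 0 := by
  cases s <;> simp [sign_eq_zero_iff, sign_eq_one_iff, sign_eq_neg_one_iff]

end SignDetermined

section Semialgebraic

open MvPolynomial Set SignType

variable {n : ℕ} {A : Set (Fin n → ℝ)}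

theorem interior_setOf_eval_eq_zero_eq_empty {σ : Type*} [Finite σ] {Q : MvPolynomial σ ℝ}
    (hQ : Q ≠ 0) : interior {x | eval x Q = 0} = ∅ := by
  cases nonempty_fintype σ
  refine eq_empty_of_forall_notMem fun x hx => hQ ?_
  obtain ⟨ε, hε, h_ball⟩ := Metric.mem_nhds_iff.1 (mem_interior_iff_mem_nhds.1 hx)
  refine funext_set (fun i => Metric.ball (x i) ε) (fun i => ?_) fun y hy => ?_
  · rw [Real.ball_eq_Ioo]
    exact Ioo_infinite (by linarith)
  · rw [map_zero]
    exact h_ball (by rwa [ball_pi x hε])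

theorem isSemialgebraic_iUnion_of_finite {ι : Type*} [Finite ι] {T : ι → Set (Fin n → ℝ)}
    (hT : ∀ k, ∃ (m : ℕ) (P : Fin m → MvPolynomial (Fin n) ℝ) (Q : MvPolynomial (Fin n) ℝ),
      T k = {x | (∀ i, 0 < eval x (P i)) ∧ eval x Q = 0}) : IsSemialgebraic (⋃ k, T k) := by
  obtain ⟨N, ⟨e⟩⟩ := Finite.exists_equiv_fin ι
  exact ⟨N, T ∘ e.symm, fun k => hT _, (e.symm.surjective.iUnion_comp T).symm⟩

theorem exists_setOf_sign_eval_eq (F : Finset (MvPolynomial (Fin n) ℝ)) (s : F → SignType) :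
    ∃ (m : ℕ) (P : Fin m → MvPolynomial (Fin n) ℝ) (Q : MvPolynomial (Fin n) ℝ),
      {x | ∀ f : F, sign (eval x f.1) = s f} =
        {x | (∀ i, 0 < eval x (P i)) ∧ eval x Q = 0} := by
  refine ⟨_, fun i => C (s (F.equivFin.symm i) : ℝ) * (F.equivFin.symm i).1 +
    C (1 - (s (F.equivFin.symm i) : ℝ) ^ 2), ∑ f, C (1 - (s f : ℝ) ^ 2) * f.1 ^ 2, ?_⟩
  ext x
  have h_nonneg (f : F) : 0 ≤ (1 - (s f : ℝ) ^ 2) * eval x f.1 ^ 2 :=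
    mul_nonneg (by cases s f <;> simp) (sq_nonneg _)
  simp only [mem_ofPred_eq, sign_eq_iff_pos_and_eq_zero, forall_and, map_add, map_sum, map_mul,
    map_pow, eval_C, Finset.sum_eq_zero_iff_of_nonneg fun f _ => h_nonneg f, Finset.mem_univ,
    true_implies, F.equivFin.symm.forall_congr_left, Equiv.symm_symm, Equiv.symm_apply_apply]

theorem IsSignDetermined.isSemialgebraic (hA : IsSignDetermined A) : IsSemialgebraic A := by
  obtain ⟨F, hF⟩ := hA
  let pattern (x : Fin n → ℝ) (f : F) : SignType := sign (eval x f.1)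
  have hA_eq : A = ⋃ s : pattern '' A, {x | ∀ f, sign (eval x f.1) = s.1 f} := by
    refine Subset.antisymm
      (fun x hx => mem_iUnion.2 ⟨⟨pattern x, x, hx, rfl⟩, fun f => rfl⟩) (iUnion_subset ?_)
    rintro ⟨_, y, hy, rfl⟩ x hx
    exact hF y x (fun f hf => (hx ⟨f, hf⟩).symm) hy
  rw [hA_eq]
  exact isSemialgebraic_iUnion_of_finite fun s => exists_setOf_sign_eval_eq F s.1

namespace IsSemialgebraic

theorem isSignDetermined (hA : IsSemialgebraic A) : IsSignDetermined A := by
  obtain ⟨N, T, hT, rfl⟩ := hA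
  refine IsSignDetermined.iUnion fun k => ?_
  obtain ⟨m, P, Q, hk⟩ := hT k
  have hk_eq : T k = (⋃ i, {x | 0 < eval x (P i)}ᶜ)ᶜ ∩ {x | eval x Q = 0} := by
    ext x
    simp [hk]
  rw [hk_eq]
  exact (IsSignDetermined.iUnion fun i => (IsSignDetermined.setOf_eval_pos _).compl).compl.inter
    (IsSignDetermined.setOf_eval_eq_zero Q)

theorem exists_ne_zero_forall_eval_eq_zero (hA : IsSemialgebraic A) (hA_int : interior A = ∅) :
    ∃ Q : MvPolynomial (Fin n) ℝ, Q ≠ 0 ∧ ∀ x ∈ A, eval x Q = 0 := by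
  obtain ⟨N, T, hT, rfl⟩ := hA
  have h_piece (k) : ∃ q : MvPolynomial (Fin n) ℝ, q ≠ 0 ∧ ∀ x ∈ T k, eval x q = 0 := by
    obtain ⟨m, P, Q, hk⟩ := hT k
    rcases eq_or_ne Q 0 with rfl | hQ
    · have h_open : IsOpen (T k) := by
        simp only [hk, map_zero, and_true, ofPred_forall]
        exact isOpen_iInter_of_finite fun i => isOpen_lt continuous_const (continuous_eval _)
      have h_empty : T k = ∅ := subset_empty_iff.1
        (hA_int ▸ interior_maximal (subset_iUnion T k) h_open)
      exact ⟨1, one_ne_zero, by simp [h_empty]⟩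
    · exact ⟨Q, hQ, fun x hx => (hk ▸ hx : _ ∧ _).2⟩
  choose q hq_ne hq using h_piece
  refine ⟨∏ k, q k, Finset.prod_ne_zero_iff.2 fun k _ => hq_ne k, fun x hx => ?_⟩
  obtain ⟨k, hk⟩ := mem_iUnion.1 hx
  rw [map_prod]
  exact Finset.prod_eq_zero (Finset.mem_univ k) (hq k x hk)

theorem interior_closure_eq_empty (hA : IsSemialgebraic A)
    (hA_int : interior A = ∅) : interior (closure A) = ∅ := by
  obtain ⟨Q, hQ, hQA⟩ := hA.exists_ne_zero_forall_eval_eq_zero hA_int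
  have h_closed : IsClosed {x | eval x Q = 0} := isClosed_eq (continuous_eval Q) continuous_const
  exact subset_empty_iff.1
    (interior_setOf_eval_eq_zero_eq_empty hQ ▸ interior_mono (closure_minimal hQA h_closed))

end IsSemialgebraic

namespace IsSemialgebraicFn

theorem isSignDetermined_comp_eq {σ : Type*} {f : (Fin n → ℝ) → ℝ}
    (hf : IsSemialgebraicFn f) (a : Fin n → σ) (b : σ) :
    IsSignDetermined {w : σ → ℝ | f (w ∘ a) = w b} := by
  have h_graph (w : σ → ℝ) : (∃ x, w ∘ (Fin.snoc a b : Fin (n + 1) → σ) = Fin.snoc x (f x)) ↔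
      f (w ∘ a) = w b := by
    simp only [Fin.comp_snoc, Fin.snoc_inj, exists_eq_left', eq_comm (a := w b)]
  simpa only [mem_ofPred_eq, h_graph] using
    hf.isSignDetermined.preimage_comp (Fin.snoc a b : Fin (n + 1) → σ)

theorem isSignDetermined_le {m : ℕ} {f : (Fin m → ℝ) → ℝ}
    {g : (Fin n → ℝ) → ℝ} (hf : IsSemialgebraicFn f) (hg : IsSemialgebraicFn g) :
    IsSignDetermined {w : Fin m ⊕ Fin n → ℝ | f (w ∘ Sum.inl) ≤ g (w ∘ Sum.inr)} := by
  have h_exists : IsSignDetermined {w : Fin m ⊕ Fin n → ℝ |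
      ∃ t : Fin 2 → ℝ, f (w ∘ Sum.inl) = t 0 ∧ g (w ∘ Sum.inr) = t 1 ∧ t 0 ≤ t 1} := by
    refine IsSignDetermined.exists_block (.inter (hf.isSignDetermined_comp_eq (Sum.inl ∘ Sum.inl)
      (Sum.inr 0)) (.inter (hg.isSignDetermined_comp_eq (Sum.inl ∘ Sum.inr) (Sum.inr 1))
      (.setOf_apply_le _ _)))
  convert h_exists using 3 with w
  exact ⟨fun h => ⟨![_, _], rfl, rfl, h⟩, fun ⟨_, hf, hg, h⟩ => hf ▸ hg ▸ h⟩

end IsSemialgebraicFn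

section BestApproximation

variable {ν : (Fin n → ℝ) → ℝ} {C : Set (Fin n → ℝ)}

theorem eq_distNu_iff {E : Type*} [AddCommGroup E] {ν : E → ℝ} (hν : ∀ x, 0 ≤ ν x) {C : Set E}
    {x z : E} (hz : z ∈ C) : ν (x - z) = distNu ν C x ↔ ∀ v ∈ C, ν (x - z) ≤ ν (x - v) := by
  have h_bdd : BddBelow ((fun y => ν (x - y)) '' C) := ⟨0, forall_mem_image.2 fun y _ => hν _⟩
  refine ⟨fun h v hv => h ▸ csInf_le h_bdd (mem_image_of_mem _ hv), fun h => ?_⟩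
  exact (le_csInf ⟨_, mem_image_of_mem _ hz⟩ (forall_mem_image.2 h)).antisymm
    (csInf_le h_bdd (mem_image_of_mem _ hz))

theorem isSignDetermined_bestApproximation (hC : IsSignDetermined C)
    (hν : IsSemialgebraicFn ν) :
    IsSignDetermined {w : Fin n ⊕ Fin n → ℝ | w ∘ Sum.inr ∈ C ∧
      ∀ v ∈ C, ν (w ∘ Sum.inl - w ∘ Sum.inr) ≤ ν (w ∘ Sum.inl - v)} := by
  refine (hC.preimage_comp Sum.inr).inter (IsSignDetermined.forall_block
    ((hC.preimage_comp Sum.inr).imp ?_))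
  convert (hν.isSignDetermined_le hν).preimage_eval (Sum.elim
    (fun i => X (Sum.inl (Sum.inl i)) - X (Sum.inl (Sum.inr i)))
    (fun i => X (Sum.inl (Sum.inl i)) - X (Sum.inr i))) using 3 with w
  simp only [mem_ofPred_eq, Function.comp_def, Sum.elim_inl, Sum.elim_inr, map_sub, eval_X]
  rfl

theorem isSemialgebraic_setOf_not_existsUnique (hC : IsSemialgebraic C)
    (hν_nonneg : ∀ x, 0 ≤ ν x) (hν : IsSemialgebraicFn ν) :
    IsSemialgebraic {x | ¬ ∃! z, z ∈ C ∧ ν (x - z) = distNu ν C x} := by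
  let Best (x z : Fin n → ℝ) : Prop := z ∈ C ∧ ∀ v ∈ C, ν (x - z) ≤ ν (x - v)
  have h_best : IsSignDetermined {w : Fin n ⊕ Fin n → ℝ | Best (w ∘ Sum.inl) (w ∘ Sum.inr)} :=
    isSignDetermined_bestApproximation hC.isSignDetermined hν
  have h_iff (x z) : z ∈ C ∧ ν (x - z) = distNu ν C x ↔ Best x z :=
    and_congr_right fun hz => eq_distNu_iff hν_nonneg hz
  have h_unique : IsSignDetermined {x | ∃ z, Best x z ∧ ∀ w, Best x w → w = z} :=
    .exists_block (h_best.inter (.forall_block (.imp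
      (h_best.preimage_comp (Sum.map Sum.inl id))
      (.setOf_comp_eq Sum.inr (Sum.inl ∘ Sum.inr)))))
  simp only [h_iff]
  exact h_unique.compl.isSemialgebraic

end BestApproximation

end Semialgebraic

/-! ### Strict convexity and best approximation -/

section DualNorm

variable {E : Type*} [NormedAddCommGroup E] [NormedSpace ℝ E]

theorem fderiv_norm_eq_inclusionInDoubleDual {x : E} {g : StrongDual ℝ E} (hx : ‖x‖ ≤ 1)
    (hgx : g x = ‖g‖) (hg : DifferentiableAt ℝ (fun r : StrongDual ℝ E => ‖r‖) g) :
    fderiv ℝ (fun r : StrongDual ℝ E => ‖r‖) g = NormedSpace.inclusionInDoubleDual ℝ E x := by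
  have h_min : IsLocalMin (fun r : StrongDual ℝ E => ‖r‖ - r x) g := .of_forall fun r => by
    simpa only [hgx, sub_self, sub_nonneg, mul_one] using
      (le_abs_self (r x)).trans (r.le_opNorm_of_le hx)
  exact sub_eq_zero.1 (h_min.hasFDerivAt_eq_zero
    (hg.hasFDerivAt.sub (NormedSpace.inclusionInDoubleDual ℝ E x).hasFDerivAt))

theorem strictConvexSpace_of_differentiableAt_norm_strongDual
    (h : ∀ g : StrongDual ℝ E, g ≠ 0 → DifferentiableAt ℝ (fun r : StrongDual ℝ E => ‖r‖) g) :
    StrictConvexSpace ℝ E := by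
  refine .of_norm_add_ne_two fun x y hx hy hxy hxy_norm => hxy ?_
  obtain ⟨g, hg, hgxy⟩ := exists_dual_vector ℝ (x + y) (by simp [hxy_norm])
  have hg_ne : g ≠ 0 := norm_ne_zero_iff.1 (hg ▸ one_ne_zero)
  have h_le {u : E} (hu : ‖u‖ = 1) : g u ≤ 1 := by
    simpa [hg, hu] using (le_abs_self _).trans (g.le_opNorm u)
  have h_add : g x + g y = 2 := by simpa [hxy_norm] using hgxy
  have hgx : g x = ‖g‖ := by linarith [h_le hx, h_le hy]
  have hgy : g y = ‖g‖ := by linarith [h_le hx, h_le hy]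
  exact (SeparatingDual.eq_iff_forall_dual_eq (R := ℝ)).2 fun r => DFunLike.congr_fun
    ((fderiv_norm_eq_inclusionInDoubleDual hx.le hgx (h g hg_ne)).symm.trans
      (fderiv_norm_eq_inclusionInDoubleDual hy.le hgy (h g hg_ne))) r

end DualNorm

section NearestPoint

open Filter Metric Set Topology

variable {E : Type*} [NormedAddCommGroup E] [NormedSpace ℝ E] [StrictConvexSpace ℝ E]

theorem eq_of_wbtw_of_dist_le {x p y z : E} (hp : Wbtw ℝ x p y) (hpx : p = x → p = y)
    (hxz : dist x y ≤ dist x z) (hpz : dist p z ≤ dist p y) : z = y := by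
  have hxpy := hp.dist_add_dist
  have h_tri := dist_triangle x p z
  have hpz_eq : dist p z = dist p y := by linarith
  have hxpz : Wbtw ℝ x p z := dist_add_dist_eq_iff.1 (by linarith)
  have h_ray : SameRay ℝ (z - p) (y - p) := hxpz.sameRay_vsub.symm.trans hp.sameRay_vsub
    fun h => .inr (sub_eq_zero.2 (hpx (sub_eq_zero.1 h)).symm)
  exact sub_left_injective <| (sameRay_iff_of_norm_eq <| by
    simpa only [dist_comm p, dist_eq_norm] using hpz_eq).1 h_ray

theorem dense_setOf_existsUnique_dist_eq_infDist [ProperSpace E] {C : Set E} (hC : IsClosed C)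
    (hC_ne : C.Nonempty) : Dense {x | ∃! z, z ∈ C ∧ dist x z = infDist x C} := by
  intro x
  obtain ⟨y, hy, hxy⟩ := hC.exists_infDist_eq_dist hC_ne x
  have h_tendsto : Tendsto (AffineMap.lineMap x y : ℝ → E) (𝓝[>] 0) (𝓝 x) :=
    (AffineMap.lineMap_continuous.tendsto' 0 x (AffineMap.lineMap_apply_zero x y)).mono_left
      nhdsWithin_le_nhds
  refine mem_closure_of_tendsto h_tendsto ?_
  filter_upwards [Ioc_mem_nhdsGT one_pos] with t ⟨ht_pos, ht_le⟩
  have h_wbtw : Wbtw ℝ x (AffineMap.lineMap x y t) y := ⟨t, ⟨ht_pos.le, ht_le⟩, rfl⟩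
  have h_end (h : AffineMap.lineMap x y t = x) : AffineMap.lineMap x y t = y := by
    have hxy : x = y := (AffineMap.lineMap_eq_left_iff.1 h).resolve_right ht_pos.ne'
    rw [hxy, AffineMap.lineMap_same_apply]
  have h_unique {z : E} (hz : z ∈ C)
      (hpz : dist (AffineMap.lineMap x y t) z = infDist (AffineMap.lineMap x y t) C) : z = y :=
    eq_of_wbtw_of_dist_le h_wbtw h_end (hxy ▸ infDist_le_dist_of_mem hz)
      (hpz ▸ infDist_le_dist_of_mem hy)
  obtain ⟨z, hz, hpz⟩ := hC.exists_infDist_eq_dist hC_ne (AffineMap.lineMap x y t)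
  exact ⟨z, ⟨hz, hpz.symm⟩, fun w hw =>
    (h_unique hw.1 hw.2).trans (h_unique hz hpz.symm).symm⟩

end NearestPoint

section NormModel

open Metric Set

universe u

-- A separate type `E` carries the norm `ν`, since `Fin n → ℝ` already has the sup norm as instance.
theorem exists_linearEquiv_norm_eq {V : Type u} [AddCommGroup V] [Module ℝ V] {ν : V → ℝ}
    (hν_eq : ∀ x, ν x = 0 ↔ x = 0) (hν_smul : ∀ (c : ℝ) (x), ν (c • x) = |c| * ν x)
    (hν_add : ∀ x y, ν (x + y) ≤ ν x + ν y) :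
    ∃ (E : Type u) (_ : NormedAddCommGroup E) (_ : NormedSpace ℝ E) (e : E ≃ₗ[ℝ] V),
      ∀ x, ν (e x) = ‖x‖ := by
  let p : AddGroupNorm V :=
    { toFun := ν
      map_zero' := (hν_eq 0).2 rfl
      add_le' := hν_add
      neg' := fun x => by simpa using hν_smul (-1) x
      eq_zero_of_map_eq_zero' := fun x => (hν_eq x).1 }
  let _ : NormedAddCommGroup V := p.toNormedAddCommGroup
  exact ⟨V, inferInstance, { norm_smul_le := fun c x => (hν_smul c x).le }, .refl ℝ V,
    fun x => rfl⟩

variable {E : Type*} [NormedAddCommGroup E] [NormedSpace ℝ E]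

theorem sSup_image_unitClosedBall_eq_norm (g : StrongDual ℝ E) :
    sSup (g '' closedBall 0 1) = ‖g‖ := by
  have h_le (x) (hx : x ∈ closedBall (0 : E) 1) : g x ≤ ‖g‖ := by
    simpa using (le_abs_self _).trans (g.le_opNorm_of_le (mem_closedBall_zero_iff.1 hx))
  have h_bdd : BddAbove (g '' closedBall 0 1) := ⟨‖g‖, forall_mem_image.2 h_le⟩
  have h_ne : (closedBall (0 : E) 1).Nonempty := nonempty_closedBall.2 zero_le_one
  refine (csSup_le (h_ne.image _) (forall_mem_image.2 h_le)).antisymm ?_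
  rw [← g.sSup_unitClosedBall_eq_norm]
  refine csSup_le (h_ne.image _) (forall_mem_image.2 fun x hx => ?_)
  refine abs_le'.2 ⟨le_csSup h_bdd (mem_image_of_mem _ hx), ?_⟩
  rw [← map_neg]
  exact le_csSup h_bdd (mem_image_of_mem _ (by simpa using hx))

theorem distNu_eq_infDist {V : Type*} [AddCommGroup V] [Module ℝ V] {ν : V → ℝ} {e : E ≃ₗ[ℝ] V}
    (hν : ∀ x, ν (e x) = ‖x‖) (C : Set V) (x : E) : distNu ν C (e x) = infDist x (e ⁻¹' C) := by
  rw [distNu, infDist_eq_iInf, ← sInf_image', ← image_preimage_eq C e.surjective, image_image,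
    preimage_image_preimage]
  simp only [dist_eq_norm, ← hν, map_sub]

variable {n : ℕ} {ν : (Fin n → ℝ) → ℝ} {e : E ≃ₗ[ℝ] (Fin n → ℝ)}

theorem dualNu_eq_norm (hν : ∀ x, ν (e x) = ‖x‖) (g : StrongDual ℝ E) :
    dualNu ν (fun i => g (e.symm (Pi.single i 1))) = ‖g‖ := by
  have h_pairing (x : E) : ∑ i, e x i * g (e.symm (Pi.single i 1)) = g x := by
    conv_rhs => rw [← e.symm_apply_apply x, pi_eq_sum_univ' (e x)]
    simp only [map_sum, map_smul, smul_eq_mul]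
  have h_ball : e '' closedBall 0 1 = {y | ν y ≤ 1} := by
    ext y
    rw [LinearEquiv.image_eq_preimage_symm]
    simp only [mem_preimage, mem_closedBall_zero_iff, ← hν, e.apply_symm_apply, mem_ofPred_eq]
  rw [dualNu, ← h_ball, image_image]
  simp only [h_pairing, sSup_image_unitClosedBall_eq_norm]

theorem strictConvexSpace_of_differentiableAt_dualNu (hν : ∀ x, ν (e x) = ‖x‖)
    (h : ∀ x, x ≠ 0 → DifferentiableAt ℝ (dualNu ν) x) : StrictConvexSpace ℝ E := by
  refine strictConvexSpace_of_differentiableAt_norm_strongDual fun g hg => ?_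
  let coeffs : StrongDual ℝ E →L[ℝ] Fin n → ℝ :=
    .pi fun i => NormedSpace.inclusionInDoubleDual ℝ E (e.symm (Pi.single i 1))
  have h_norm (r) : dualNu ν (coeffs r) = ‖r‖ := dualNu_eq_norm hν r
  have h_coeffs : coeffs g ≠ 0 := fun h0 => hg <| by
    rw [← norm_eq_zero, ← h_norm, h0, ← map_zero coeffs, h_norm, norm_zero]
  simpa only [Function.comp_def, h_norm] using
    (h _ h_coeffs).comp g coeffs.differentiableAt

theorem interior_setOf_not_existsUnique_eq_empty {C : Set (Fin n → ℝ)} (hC : IsClosed C)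
    (hC_ne : C.Nonempty) (hν : ∀ x, ν (e x) = ‖x‖)
    (h : ∀ x, x ≠ 0 → DifferentiableAt ℝ (dualNu ν) x) :
    interior {x | ¬ ∃! z, z ∈ C ∧ ν (x - z) = distNu ν C x} = ∅ := by
  have : FiniteDimensional ℝ E := e.symm.finiteDimensional
  have : StrictConvexSpace ℝ E := strictConvexSpace_of_differentiableAt_dualNu hν h
  have : ProperSpace E := FiniteDimensional.proper_real E
  let φ := e.toContinuousLinearEquiv
  have h_dense := dense_setOf_existsUnique_dist_eq_infDist (hC.preimage φ.continuous)
    (hC_ne.preimage φ.surjective)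
  have h_iff (x : E) : (∃! z, z ∈ C ∧ ν (e x - z) = distNu ν C (e x)) ↔
      ∃! z, z ∈ e ⁻¹' C ∧ dist x z = infDist x (e ⁻¹' C) := by
    rw [e.bijective.existsUnique_iff]
    simp only [distNu_eq_infDist hν, ← map_sub, hν, mem_preimage, dist_eq_norm]
  rw [interior_eq_empty_iff_dense_compl, compl_ofPred]
  refine (h_dense.preimage φ.symm.toHomeomorph.isOpenMap).mono fun y hy => not_not.2 ?_
  simpa only [e.apply_symm_apply] using (h_iff (e.symm y)).2 hy

end NormModel

theorem stmt10_general {n : ℕ} (C : Set (Fin n → ℝ))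
    (hCne : C.Nonempty) (hCcl : IsClosed C) (hCsa : IsSemialgebraic C)
    (ν : (Fin n → ℝ) → ℝ)
    (hν_eq : ∀ x, ν x = 0 ↔ x = 0)
    (hν_smul : ∀ (c : ℝ) (x), ν (c • x) = |c| * ν x)
    (hν_add : ∀ x y, ν (x + y) ≤ ν x + ν y)
    (hν_sa : IsSemialgebraicFn ν)
    (hν_star_diff : ∀ x : Fin n → ℝ, x ≠ 0 → DifferentiableAt ℝ (dualNu ν) x)
    (S : Set (Fin n → ℝ))
    (hS : S = {x | ¬ ∃! z, z ∈ C ∧ ν (x - z) = distNu ν C x}) :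
    IsSemialgebraic S ∧ interior (closure S) = ∅ ∧
    ∃ Q : MvPolynomial (Fin n) ℝ, Q ≠ 0 ∧ ∀ x ∈ S, MvPolynomial.eval x Q = 0 := by
  obtain ⟨E, _, _, e, hν⟩ := exists_linearEquiv_norm_eq hν_eq hν_smul hν_add
  have hν_nonneg (x) : 0 ≤ ν x := by
    rw [← e.apply_symm_apply x, hν]
    exact norm_nonneg _
  have hS_sa : IsSemialgebraic S :=
    hS ▸ isSemialgebraic_setOf_not_existsUnique hCsa hν_nonneg hν_sa
  have hS_int : interior S = ∅ :=
    hS ▸ interior_setOf_not_existsUnique_eq_empty hCcl hCne hν hν_star_diff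
  exact ⟨hS_sa, hS_sa.interior_closure_eq_empty hS_int,
    hS_sa.exists_ne_zero_forall_eval_eq_zero hS_int⟩

/-- Let `C ⊆ ℝⁿ` be a nonempty closed semi-algebraic set and `ν` a semi-algebraic norm
such that `ν` and its dual norm `ν*` are differentiable away from the origin.  Then the
set `S(C)` of points without a unique best `ν`-approximation in `C` is a nowhere dense
semi-algebraic set; in particular it is contained in the zero set of a nonzero polynomial. -/
theorem stmt10 {n : ℕ} (C : Set (Fin n → ℝ))
    (hCne : C.Nonempty) (hCcl : IsClosed C) (hCsa : IsSemialgebraic C)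
    (ν : (Fin n → ℝ) → ℝ)
    (hν_eq : ∀ x, ν x = 0 ↔ x = 0)
    (hν_smul : ∀ (c : ℝ) (x), ν (c • x) = |c| * ν x)
    (hν_add : ∀ x y, ν (x + y) ≤ ν x + ν y)
    (hν_sa : IsSemialgebraicFn ν)
    (hν_diff : ∀ x : Fin n → ℝ, x ≠ 0 → DifferentiableAt ℝ ν x)
    (hν_star_diff : ∀ x : Fin n → ℝ, x ≠ 0 → DifferentiableAt ℝ (dualNu ν) x)
    (S : Set (Fin n → ℝ))
    (hS : S = {x | ¬ ∃! z, z ∈ C ∧ ν (x - z) = distNu ν C x}) :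
    IsSemialgebraic S ∧ interior (closure S) = ∅ ∧
    ∃ Q : MvPolynomial (Fin n) ℝ, Q ≠ 0 ∧ ∀ x ∈ S, MvPolynomial.eval x Q = 0 :=
  stmt10_general C hCne hCcl hCsa ν hν_eq hν_smul hν_add hν_sa hν_star_diff S hS
end

section
/- Let C ⊆ ℝⁿ be a nonempty closed semi-algebraic set and let ν be a semi-algebraic norm on ℝⁿ such that both ν and its dual norm ν* are (Fréchet) differentiable at every point other than the origin. Let S(C) be the set of x ∈ ℝⁿ whose best ν-approximation in C is not unique. Then Ω_ν(C) := {(x, z) : x ∈ ℝⁿ \ S(C), z ∈ C, dist_ν(x, C) = ν(x − z)} is a semi-algebraic subset of ℝⁿ × ℝⁿ, and its projection onto the first factor equals ℝⁿ \ S(C), which is a dense subset of ℝⁿ. -/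
/-- A subset of `ℝⁿ × ℝⁿ` is semi-algebraic if the corresponding subset of `ℝ^(n+n)`
(obtained by concatenating coordinates) is semi-algebraic. -/
def IsSemialgebraicProd {n : ℕ} (S : Set ((Fin n → ℝ) × (Fin n → ℝ))) : Prop :=
  IsSemialgebraic {z : Fin (n + n) → ℝ | ∃ p ∈ S, z = Fin.append p.1 p.2}

open Set Filter Topology SignType

section BestApproximation

/-- `z` is a best `ν`-approximation of `x` in `C`. Stating this by comparison with every point of
`C`, instead of through `distNu`, makes it a first-order formula over `ν` and `C`. -/
def IsBestApprox {E : Type*} [Sub E] (ν : E → ℝ) (C : Set E) (x z : E) : Prop :=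
  z ∈ C ∧ ∀ w ∈ C, ν (x - z) ≤ ν (x - w)

/-- `z` is the only best `ν`-approximation of `x` in `C`. -/
def IsUniqueBestApprox {E : Type*} [Sub E] (ν : E → ℝ) (C : Set E) (x z : E) : Prop :=
  IsBestApprox ν C x z ∧ ∀ w, IsBestApprox ν C x w → w = z

lemma isBestApprox_iff_eq_distNu {E : Type*} [AddCommGroup E] {ν : E → ℝ} (hν : ∀ x, 0 ≤ ν x)
    {C : Set E} {x z : E} : IsBestApprox ν C x z ↔ z ∈ C ∧ ν (x - z) = distNu ν C x := by
  refine and_congr_right fun hz ↦ ⟨fun hmin ↦ ?_, fun heq w hw ↦ ?_⟩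
  · have hleast : IsLeast ((fun y ↦ ν (x - y)) '' C) (ν (x - z)) :=
      ⟨mem_image_of_mem _ hz, forall_mem_image.2 hmin⟩
    exact hleast.csInf_eq.symm
  · rw [heq]
    exact csInf_le ⟨0, forall_mem_image.2 fun _ _ ↦ hν _⟩ (mem_image_of_mem _ hw)

lemma isBestApprox_preimage_iff {E F : Type*} [AddCommGroup E] [AddCommGroup F] (e : E ≃+ F)
    (ν : F → ℝ) (C : Set F) (x z : E) :
    IsBestApprox (ν ∘ e) (e ⁻¹' C) x z ↔ IsBestApprox ν C (e x) (e z) := by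
  simp only [IsBestApprox, mem_preimage, Function.comp_apply, map_sub, e.surjective.forall]

variable {E : Type*} [NormedAddCommGroup E]

lemma exists_isBestApprox_norm [ProperSpace E] {C : Set E} (hne : C.Nonempty) (hC : IsClosed C)
    (x : E) : ∃ z, IsBestApprox norm C x z := by
  obtain ⟨z, hz, hdist⟩ := hC.exists_infDist_eq_dist hne x
  refine ⟨z, hz, fun w hw ↦ ?_⟩
  rw [← dist_eq_norm, ← dist_eq_norm, ← hdist]
  exact Metric.infDist_le_dist_of_mem hw

variable [NormedSpace ℝ E]

lemma isUniqueBestApprox_lineMap [StrictConvexSpace ℝ E] {C : Set E} {x z : E}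
    (hz : IsBestApprox norm C x z) {t : ℝ} (ht : t ∈ Ioc (0 : ℝ) 1) :
    IsUniqueBestApprox norm C (AffineMap.lineMap x z t) z := by
  set y := AffineMap.lineMap (k := ℝ) x z t with hy
  have hxy : dist x y = t * dist x z := by
    rw [hy, dist_left_lineMap, Real.norm_of_nonneg ht.1.le]
  have hyz : dist y z = (1 - t) * dist x z := by
    rw [hy, dist_lineMap_right, Real.norm_of_nonneg (sub_nonneg.2 ht.2)]
  simp only [IsUniqueBestApprox, IsBestApprox, ← dist_eq_norm] at hz ⊢
  have hle (w : E) (hw : w ∈ C) : dist y z ≤ dist y w := by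
    linarith [hz.2 w hw, dist_triangle x y w]
  refine ⟨⟨hz.1, hle⟩, fun w hw ↦ ?_⟩
  have hyw : dist y w = dist y z := (hw.2 z hz.1).antisymm (hle w hw.1)
  have hxw : dist x w = dist x z :=
    le_antisymm (by linarith [dist_triangle x y w]) (hz.2 w hw.1)
  have hyline : y = AffineMap.lineMap x w t :=
    eq_lineMap_of_dist_eq_mul_of_dist_eq_mul (by rw [hxy, hxw]) (by rw [hyw, hyz, hxw])
  have hsmul : t • (z - x) = t • (w - x) := by
    simpa only [hy, AffineMap.lineMap_apply_module', add_left_inj] using hyline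
  exact (sub_left_injective (smul_right_injective E ht.1.ne' hsmul)).symm

lemma dense_setOf_isUniqueBestApprox_norm [ProperSpace E] [StrictConvexSpace ℝ E] {C : Set E}
    (hne : C.Nonempty) (hC : IsClosed C) : Dense {x | ∃ z, IsUniqueBestApprox norm C x z} := by
  intro x
  obtain ⟨z, hz⟩ := exists_isBestApprox_norm hne hC x
  have hx : x ∈ closure (openSegment ℝ x z) := by
    rw [closure_openSegment]
    exact left_mem_segment ℝ x z
  refine closure_mono ?_ hx
  rw [openSegment_eq_image_lineMap]
  rintro _ ⟨t, ht, rfl⟩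
  exact ⟨z, isUniqueBestApprox_lineMap hz ⟨ht.1, ht.2.le⟩⟩

end BestApproximation

section StrictConvexity

variable {E : Type*} [NormedAddCommGroup E] [NormedSpace ℝ E]

lemma fderiv_norm_dual_eq_inclusionInDoubleDual {φ : StrongDual ℝ E} {x : E}
    (hφ : DifferentiableAt ℝ norm φ) (hx : ‖x‖ ≤ 1) (hφx : φ x = ‖φ‖) :
    fderiv ℝ norm φ = NormedSpace.inclusionInDoubleDual ℝ E x := by
  have hmin : IsLocalMin (fun ψ : StrongDual ℝ E ↦
      ‖ψ‖ - NormedSpace.inclusionInDoubleDual ℝ E x ψ) φ := by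
    refine Eventually.of_forall fun ψ ↦ ?_
    simp only [NormedSpace.dual_def, hφx, sub_self, sub_nonneg]
    exact (le_abs_self _).trans (ψ.unit_le_opNorm x hx)
  exact sub_eq_zero.1 (hmin.hasFDerivAt_eq_zero
    (hφ.hasFDerivAt.sub (ContinuousLinearMap.hasFDerivAt _)))

theorem strictConvexSpace_of_differentiableAt_norm_dual
    (h : ∀ φ : StrongDual ℝ E, φ ≠ 0 → DifferentiableAt ℝ norm φ) : StrictConvexSpace ℝ E := by
  refine StrictConvexSpace.of_norm_add_ne_two fun x y hx hy hxy hadd ↦ hxy ?_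
  obtain ⟨φ, hφ, hφadd⟩ := exists_dual_vector ℝ (x + y) (by simp [hadd])
  have hφx : φ x ≤ 1 := (le_abs_self _).trans (by simpa [hφ, hx] using φ.le_opNorm x)
  have hφy : φ y ≤ 1 := (le_abs_self _).trans (by simpa [hφ, hy] using φ.le_opNorm y)
  have hsum : φ x + φ y = 2 := by simpa [hadd] using hφadd
  have hdiff := h φ (norm_ne_zero_iff.1 (by simp [hφ]))
  apply (NormedSpace.inclusionInDoubleDualLi ℝ (E := E)).injective
  exact (fderiv_norm_dual_eq_inclusionInDoubleDual hdiff hx.le (by linarith)).symm.trans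
    (fderiv_norm_dual_eq_inclusionInDoubleDual hdiff hy.le (by linarith))

lemma sSup_image_closedBall_eq_norm (φ : StrongDual ℝ E) :
    sSup (φ '' Metric.closedBall 0 1) = ‖φ‖ := by
  have hle (x : E) (hx : x ∈ Metric.closedBall 0 1) : φ x ≤ ‖φ‖ :=
    (le_abs_self _).trans (φ.unit_le_opNorm x (mem_closedBall_zero_iff.1 hx))
  have hne : (Metric.closedBall (0 : E) 1).Nonempty := Metric.nonempty_closedBall.2 zero_le_one
  refine (csSup_le (hne.image _) (forall_mem_image.2 hle)).antisymm ?_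
  rw [← φ.sSup_unitClosedBall_eq_norm]
  refine csSup_le (hne.image _) (forall_mem_image.2 fun x hx ↦ ?_)
  have hmem (y : E) (hy : y ∈ Metric.closedBall 0 1) : φ y ≤ sSup (φ '' Metric.closedBall 0 1) :=
    le_csSup ⟨‖φ‖, forall_mem_image.2 hle⟩ (mem_image_of_mem _ hy)
  refine abs_le'.2 ⟨hmem x hx, ?_⟩
  simpa using hmem (-x) (by simpa using hx)

end StrictConvexity

section Transfer

universe u

lemma nonneg_of_homogeneous_of_subadditive {V : Type*} [AddCommGroup V] [Module ℝ V] {ν : V → ℝ}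
    (hν_smul : ∀ (c : ℝ) (x), ν (c • x) = |c| * ν x) (hν_add : ∀ x y, ν (x + y) ≤ ν x + ν y)
    (x : V) : 0 ≤ ν x :=
  apply_nonneg (Seminorm.of ν hν_add hν_smul) x

lemma exists_normedSpace_linearEquiv {V : Type u} [AddCommGroup V] [Module ℝ V] {ν : V → ℝ}
    (hν_eq : ∀ x, ν x = 0 ↔ x = 0) (hν_smul : ∀ (c : ℝ) (x), ν (c • x) = |c| * ν x)
    (hν_add : ∀ x y, ν (x + y) ≤ ν x + ν y) :
    ∃ (E : Type u) (_ : NormedAddCommGroup E) (_ : NormedSpace ℝ E) (e : E ≃ₗ[ℝ] V),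
      ν ∘ e = norm := by
  let : Norm V := ⟨ν⟩
  have core : NormedSpace.Core ℝ V :=
    { norm_nonneg := nonneg_of_homogeneous_of_subadditive hν_smul hν_add
      norm_smul := hν_smul
      norm_triangle := hν_add
      norm_eq_zero_iff := hν_eq }
  let := NormedAddCommGroup.ofCore core
  exact ⟨V, this, NormedSpace.ofCore core, LinearEquiv.refl ℝ V, rfl⟩

variable {n : ℕ} {ν : (Fin n → ℝ) → ℝ}
  {E : Type*} [NormedAddCommGroup E] [NormedSpace ℝ E] {e : E ≃ₗ[ℝ] (Fin n → ℝ)}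

lemma dualNu_apply_symm_single (he : ν ∘ e = norm) (φ : StrongDual ℝ E) :
    dualNu ν (fun i ↦ φ (e.symm (Pi.single i 1))) = ‖φ‖ := by
  have hφ (x : E) : ∑ i, e x i * φ (e.symm (Pi.single i 1)) = φ x := by
    have hx : x = ∑ i, e x i • e.symm (Pi.single i 1) := by
      apply e.injective
      ext j
      simp [Pi.single_apply]
    conv_rhs => rw [hx, map_sum]
    simp only [map_smul, smul_eq_mul]
  have hball : {y | ν y ≤ 1} = e '' Metric.closedBall 0 1 := by
    ext y
    obtain ⟨x, rfl⟩ := e.surjective y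
    simp [← he]
  rw [dualNu, hball, image_image]
  simp only [hφ]
  exact sSup_image_closedBall_eq_norm φ

lemma differentiableAt_norm_dual_of_dualNu (he : ν ∘ e = norm)
    (hd : ∀ x : Fin n → ℝ, x ≠ 0 → DifferentiableAt ℝ (dualNu ν) x) (φ : StrongDual ℝ E)
    (hφ : φ ≠ 0) : DifferentiableAt ℝ norm φ := by
  set coords : StrongDual ℝ E → Fin n → ℝ := fun ψ i ↦ ψ (e.symm (Pi.single i 1)) with hcoords
  have hnorm : norm = dualNu ν ∘ coords := funext fun ψ ↦ (dualNu_apply_symm_single he ψ).symm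
  have hne : coords φ ≠ 0 := by
    intro h0
    have hν0 : dualNu ν 0 = 0 := by
      have := congrFun hnorm 0
      simpa [hcoords, Pi.zero_def] using this.symm
    refine hφ (norm_eq_zero.1 ?_)
    rw [hnorm, Function.comp_apply, h0, hν0]
  rw [hnorm]
  exact (hd _ hne).comp φ (by fun_prop)

end Transfer

theorem dense_setOf_isUniqueBestApprox {n : ℕ} {ν : (Fin n → ℝ) → ℝ}
    (hν_eq : ∀ x, ν x = 0 ↔ x = 0) (hν_smul : ∀ (c : ℝ) (x), ν (c • x) = |c| * ν x)
    (hν_add : ∀ x y, ν (x + y) ≤ ν x + ν y)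
    (hν_star_diff : ∀ x : Fin n → ℝ, x ≠ 0 → DifferentiableAt ℝ (dualNu ν) x)
    {C : Set (Fin n → ℝ)} (hne : C.Nonempty) (hC : IsClosed C) :
    Dense {x | ∃ z, IsUniqueBestApprox ν C x z} := by
  obtain ⟨E, _, _, e, he⟩ := exists_normedSpace_linearEquiv hν_eq hν_smul hν_add
  have : FiniteDimensional ℝ E := e.symm.finiteDimensional
  have : ProperSpace E := FiniteDimensional.proper_real E
  have : StrictConvexSpace ℝ E := strictConvexSpace_of_differentiableAt_norm_dual
    (differentiableAt_norm_dual_of_dualNu he hν_star_diff)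
  have he_cont : Continuous e := e.toLinearMap.continuous_of_finiteDimensional
  have hdense := dense_setOf_isUniqueBestApprox_norm (hne.preimage e.surjective)
    (hC.preimage he_cont)
  refine (e.surjective.denseRange.dense_image he_cont hdense).mono ?_
  rintro _ ⟨x, ⟨z, hz, huniq⟩, rfl⟩
  have htransfer := isBestApprox_preimage_iff e.toAddEquiv ν C x
  refine ⟨e z, ?_, e.surjective.forall.2 fun w hw ↦ ?_⟩
  · exact (htransfer z).1 (he ▸ hz)
  · rw [huniq w (he ▸ (htransfer w).2 hw)]

section SignMatching

open Polynomial

/-- The signs of `f` on `(a, b)` and of `g` on `(a', b')` match: either they are one and the same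
constant, or both functions vanish at an interior point and on each side of these two points the
signs are again one and the same constant. -/
def SignsMatchOrSplit (f g : ℝ → ℝ) (a b a' b' : ℝ) : Prop :=
  (∀ x ∈ Ioo a b, ∀ x' ∈ Ioo a' b', sign (f x) = sign (g x')) ∨
    ∃ c ∈ Ioo a b, ∃ c' ∈ Ioo a' b', f c = 0 ∧ g c' = 0 ∧
      (∀ x ∈ Ioo a c, ∀ x' ∈ Ioo a' c', sign (f x) = sign (g x')) ∧
      ∀ x ∈ Ioo c b, ∀ x' ∈ Ioo c' b', sign (f x) = sign (g x')

lemma exists_zero_of_strictMonoOn {f : ℝ → ℝ} {a b : ℝ} (hab : a ≤ b)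
    (hf : ContinuousOn f (Icc a b)) (hmono : StrictMonoOn f (Icc a b)) (ha : f a < 0)
    (hb : 0 < f b) :
    ∃ c ∈ Ioo a b, f c = 0 ∧ (∀ x ∈ Ioo a c, f x < 0) ∧ ∀ x ∈ Ioo c b, 0 < f x := by
  obtain ⟨c, hc, hfc⟩ := intermediate_value_Ioo hab hf ⟨ha, hb⟩
  have hc' := Ioo_subset_Icc_self hc
  refine ⟨c, hc, hfc, fun x hx ↦ ?_, fun x hx ↦ ?_⟩
  · exact hfc ▸ hmono ⟨hx.1.le, (hx.2.trans hc.2).le⟩ hc' hx.2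
  · exact hfc ▸ hmono hc' ⟨(hc.1.trans hx.1).le, hx.2.le⟩ hx.1

lemma signsMatchOrSplit_of_strictMonoOn {f g : ℝ → ℝ} {a b a' b' : ℝ} (hab : a ≤ b)
    (hab' : a' ≤ b') (hf : ContinuousOn f (Icc a b)) (hg : ContinuousOn g (Icc a' b'))
    (hfmono : StrictMonoOn f (Icc a b)) (hgmono : StrictMonoOn g (Icc a' b'))
    (ha : sign (f a) = sign (g a')) (hb : sign (f b) = sign (g b')) :
    SignsMatchOrSplit f g a b a' b' := by
  rcases le_or_gt 0 (f a) with hfa | hfa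
  · have hga : 0 ≤ g a' := by rwa [← sign_nonneg_iff, ← ha, sign_nonneg_iff]
    refine Or.inl fun x hx x' hx' ↦ ?_
    have hfx := hfmono (left_mem_Icc.2 hab) (Ioo_subset_Icc_self hx) hx.1
    have hgx := hgmono (left_mem_Icc.2 hab') (Ioo_subset_Icc_self hx') hx'.1
    rw [sign_pos (hfa.trans_lt hfx), sign_pos (hga.trans_lt hgx)]
  rcases le_or_gt (f b) 0 with hfb | hfb
  · have hgb : g b' ≤ 0 := by rwa [← sign_nonpos_iff, ← hb, sign_nonpos_iff]
    refine Or.inl fun x hx x' hx' ↦ ?_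
    have hfx := hfmono (Ioo_subset_Icc_self hx) (right_mem_Icc.2 hab) hx.2
    have hgx := hgmono (Ioo_subset_Icc_self hx') (right_mem_Icc.2 hab') hx'.2
    rw [sign_neg (hfx.trans_le hfb), sign_neg (hgx.trans_le hgb)]
  have hga : g a' < 0 := by rwa [← sign_eq_neg_one_iff, ← ha, sign_eq_neg_one_iff]
  have hgb : 0 < g b' := by rwa [← sign_eq_one_iff, ← hb, sign_eq_one_iff]
  obtain ⟨c, hc, hfc, hfneg, hfpos⟩ := exists_zero_of_strictMonoOn hab hf hfmono hfa hfb
  obtain ⟨c', hc', hgc, hgneg, hgpos⟩ := exists_zero_of_strictMonoOn hab' hg hgmono hga hgb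
  refine Or.inr ⟨c, hc, c', hc', hfc, hgc, fun x hx x' hx' ↦ ?_, fun x hx x' hx' ↦ ?_⟩
  · rw [sign_neg (hfneg x hx), sign_neg (hgneg x' hx')]
  · rw [sign_pos (hfpos x hx), sign_pos (hgpos x' hx')]

lemma signsMatchOrSplit_of_strictAntiOn {f g : ℝ → ℝ} {a b a' b' : ℝ} (hab : a ≤ b)
    (hab' : a' ≤ b') (hf : ContinuousOn f (Icc a b)) (hg : ContinuousOn g (Icc a' b'))
    (hfanti : StrictAntiOn f (Icc a b)) (hganti : StrictAntiOn g (Icc a' b'))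
    (ha : sign (f a) = sign (g a')) (hb : sign (f b) = sign (g b')) :
    SignsMatchOrSplit f g a b a' b' := by
  have hneg : SignsMatchOrSplit (fun x ↦ -f x) (fun x ↦ -g x) a b a' b' :=
    signsMatchOrSplit_of_strictMonoOn hab hab' hf.neg hg.neg hfanti.neg hganti.neg
      (by simp only [Left.sign_neg, ha]) (by simp only [Left.sign_neg, hb])
  simpa only [SignsMatchOrSplit, Left.sign_neg, neg_inj, neg_eq_zero] using hneg

lemma strictMonoOn_eval_of_derivative_pos {p : ℝ[X]} {a b : ℝ}
    (hp : ∀ x ∈ Ioo a b, 0 < p.derivative.eval x) : StrictMonoOn (p.eval ·) (Icc a b) :=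
  strictMonoOn_of_deriv_pos (convex_Icc a b) p.continuousOn fun x hx ↦ by
    rw [interior_Icc] at hx
    simpa only [Polynomial.deriv] using hp x hx

lemma strictAntiOn_eval_of_derivative_neg {p : ℝ[X]} {a b : ℝ}
    (hp : ∀ x ∈ Ioo a b, p.derivative.eval x < 0) : StrictAntiOn (p.eval ·) (Icc a b) :=
  strictAntiOn_of_deriv_neg (convex_Icc a b) p.continuousOn fun x hx ↦ by
    rw [interior_Icc] at hx
    simpa only [Polynomial.deriv] using hp x hx

lemma eval_eq_eval_of_derivative_eq_zero_on {p : ℝ[X]} {a b : ℝ} (hab : a < b)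
    (hp : ∀ x ∈ Ioo a b, p.derivative.eval x = 0) (x y : ℝ) : p.eval x = p.eval y := by
  have hder : derivative p = 0 :=
    eq_zero_of_infinite_isRoot _ ((Ioo_infinite hab).mono hp)
  rw [eq_C_of_derivative_eq_zero hder, eval_C, eval_C]

lemma signsMatchOrSplit_eval {p q : ℝ[X]} {a b a' b' : ℝ} (hab : a < b) (hab' : a' < b')
    (hder : ∀ x ∈ Ioo a b, ∀ x' ∈ Ioo a' b',
      sign (p.derivative.eval x) = sign (q.derivative.eval x'))
    (ha : sign (p.eval a) = sign (q.eval a')) (hb : sign (p.eval b) = sign (q.eval b')) :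
    SignsMatchOrSplit (p.eval ·) (q.eval ·) a b a' b' := by
  obtain ⟨m, hm⟩ := nonempty_Ioo.2 hab
  obtain ⟨m', hm'⟩ := nonempty_Ioo.2 hab'
  have hq (x') (hx' : x' ∈ Ioo a' b') :
      sign (q.derivative.eval x') = sign (p.derivative.eval m) := (hder m hm x' hx').symm
  have hp (x) (hx : x ∈ Ioo a b) :
      sign (p.derivative.eval x) = sign (p.derivative.eval m) :=
    (hder x hx m' hm').trans (hq m' hm')
  rcases lt_trichotomy (p.derivative.eval m) 0 with hs | hs | hs
  · simp only [sign_neg hs, sign_eq_neg_one_iff] at hp hq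
    exact signsMatchOrSplit_of_strictAntiOn hab.le hab'.le p.continuousOn q.continuousOn
      (strictAntiOn_eval_of_derivative_neg hp) (strictAntiOn_eval_of_derivative_neg hq) ha hb
  · simp only [hs, sign_zero, sign_eq_zero_iff] at hp hq
    refine Or.inl fun x _ x' _ ↦ ?_
    dsimp only
    rw [eval_eq_eval_of_derivative_eq_zero_on hab hp x a,
      eval_eq_eval_of_derivative_eq_zero_on hab' hq x' a', ha]
  · simp only [sign_pos hs, sign_eq_one_iff] at hp hq
    exact signsMatchOrSplit_of_strictMonoOn hab.le hab'.le p.continuousOn q.continuousOn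
      (strictMonoOn_eval_of_derivative_pos hp) (strictMonoOn_eval_of_derivative_pos hq) ha hb

variable {ι : Type*}

/-- For every index `i ∈ s`, the sign of `p i` at `x` is that of `q i` at `x'`. -/
def SignsAgree (p q : ι → ℝ[X]) (s : Set ι) (x x' : ℝ) : Prop :=
  ∀ i ∈ s, sign ((p i).eval x) = sign ((q i).eval x')

/-- The sign diagram of the polynomials `p i`, `i ∈ s`, on `(a, b)` coincides with that of the
`q i` on `(a', b')`. A diagram is a binary tree of subdivisions at points where some nonzero `p i`
vanishes, so an induction on it never has to list the roots. -/
inductive SignDiagramsMatch (p q : ι → ℝ[X]) (s : Set ι) : ℝ → ℝ → ℝ → ℝ → Prop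
  | const {a b a' b' : ℝ} (hab : a < b) (hab' : a' < b')
      (h : ∀ x ∈ Ioo a b, ∀ x' ∈ Ioo a' b', SignsAgree p q s x x') :
      SignDiagramsMatch p q s a b a' b'
  | split {a c b a' c' b' : ℝ} (hroot : ∃ i ∈ s, p i ≠ 0 ∧ (p i).eval c = 0)
      (hc : SignsAgree p q s c c') (hleft : SignDiagramsMatch p q s a c a' c')
      (hright : SignDiagramsMatch p q s c b c' b') : SignDiagramsMatch p q s a b a' b'

variable {p q : ι → ℝ[X]} {s : Set ι} {i : ι} {a b a' b' : ℝ}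

lemma signsAgree_insert_iff {x x' : ℝ} : SignsAgree p q (insert i s) x x' ↔
    sign ((p i).eval x) = sign ((q i).eval x') ∧ SignsAgree p q s x x' :=
  forall_mem_insert

namespace SignDiagramsMatch

lemma exists_signsAgree (h : SignDiagramsMatch p q s a b a' b') {x : ℝ} (hx : x ∈ Ioo a b) :
    ∃ x', SignsAgree p q s x x' := by
  induction h with
  | const _ hab' h =>
    obtain ⟨x', hx'⟩ := nonempty_Ioo.2 hab'
    exact ⟨x', h x hx x' hx'⟩
  | @split a c b a' c' b' _ hc _ _ ihleft ihright =>
    rcases lt_trichotomy x c with hxc | rfl | hxc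
    · exact ihleft ⟨hx.1, hxc⟩
    · exact ⟨c', hc⟩
    · exact ihright ⟨hxc, hx.2⟩

lemma insert_of_signsAgree (h : SignDiagramsMatch p q s a b a' b')
    (hi : ∀ x x', SignsAgree p q s x x' → sign ((p i).eval x) = sign ((q i).eval x')) :
    SignDiagramsMatch p q (insert i s) a b a' b' := by
  induction h with
  | const hab hab' h =>
    exact const hab hab' fun x hx x' hx' ↦
      signsAgree_insert_iff.2 ⟨hi x x' (h x hx x' hx'), h x hx x' hx'⟩
  | split hroot hc _ _ ihleft ihright =>
    obtain ⟨j, hj, hroot⟩ := hroot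
    exact split ⟨j, mem_insert_of_mem i hj, hroot⟩ (signsAgree_insert_iff.2 ⟨hi _ _ hc, hc⟩)
      ihleft ihright

lemma insert_of_const (hab : a < b) (hab' : a' < b')
    (h : ∀ x ∈ Ioo a b, ∀ x' ∈ Ioo a' b', SignsAgree p q s x x') (hne : p i ≠ 0)
    (hi : SignsMatchOrSplit ((p i).eval ·) ((q i).eval ·) a b a' b') :
    SignDiagramsMatch p q (insert i s) a b a' b' := by
  rcases hi with hi | ⟨c, hc, c', hc', hpc, hqc, hleft, hright⟩
  · exact const hab hab' fun x hx x' hx' ↦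
      signsAgree_insert_iff.2 ⟨hi x hx x' hx', h x hx x' hx'⟩
  · refine split (c := c) (c' := c') ⟨i, mem_insert i s, hne, hpc⟩
      (signsAgree_insert_iff.2 ⟨?_, h c hc c' hc'⟩)
      (const hc.1 hc'.1 fun x hx x' hx' ↦ signsAgree_insert_iff.2 ⟨hleft x hx x' hx', ?_⟩)
      (const hc.2 hc'.2 fun x hx x' hx' ↦ signsAgree_insert_iff.2 ⟨hright x hx x' hx', ?_⟩)
    · rw [show (p i).eval c = 0 from hpc, show (q i).eval c' = 0 from hqc]
    · exact h x (Ioo_subset_Ioo_right hc.2.le hx) x' (Ioo_subset_Ioo_right hc'.2.le hx')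
    · exact h x (Ioo_subset_Ioo_left hc.1.le hx) x' (Ioo_subset_Ioo_left hc'.1.le hx')

lemma insert_of_derivative (h : SignDiagramsMatch p q s a b a' b') (hne : p i ≠ 0)
    (hder : ∀ x x', SignsAgree p q s x x' →
      sign ((p i).derivative.eval x) = sign ((q i).derivative.eval x'))
    (hroot : ∀ c c', (∃ j ∈ s, p j ≠ 0 ∧ (p j).eval c = 0) → SignsAgree p q s c c' →
      sign ((p i).eval c) = sign ((q i).eval c'))
    (ha : sign ((p i).eval a) = sign ((q i).eval a'))
    (hb : sign ((p i).eval b) = sign ((q i).eval b')) :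
    SignDiagramsMatch p q (insert i s) a b a' b' := by
  induction h with
  | const hab hab' h =>
    exact insert_of_const hab hab' h hne (signsMatchOrSplit_eval hab hab'
      (fun x hx x' hx' ↦ hder x x' (h x hx x' hx')) ha hb)
  | split hc_root hc _ _ ihleft ihright =>
    have hic := hroot _ _ hc_root hc
    obtain ⟨j, hj, hj_root⟩ := hc_root
    exact split ⟨j, mem_insert_of_mem i hj, hj_root⟩ (signsAgree_insert_iff.2 ⟨hic, hc⟩)
      (ihleft ha hic) (ihright hic hb)

end SignDiagramsMatch

lemma eventually_atTop_sign_eval (p : ℝ[X]) :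
    ∀ᶠ x in atTop, sign (p.eval x) = sign p.leadingCoeff := by
  rcases le_or_gt p.degree 0 with hd | hd
  · rw [eq_C_of_degree_le_zero hd]
    simp
  rcases lt_trichotomy p.leadingCoeff 0 with h | h | h
  · filter_upwards [(p.tendsto_atBot_of_leadingCoeff_nonpos hd h.le).eventually_lt_atBot 0]
      with x hx
    rw [sign_neg hx, sign_neg h]
  · simp [leadingCoeff_eq_zero.1 h]
  · filter_upwards [(p.tendsto_atTop_of_leadingCoeff_nonneg hd h.le).eventually_gt_atTop 0]
      with x hx
    rw [sign_pos hx, sign_pos h]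

lemma eventually_atTop_sign_eval_neg (p : ℝ[X]) :
    ∀ᶠ x in atTop, sign (p.eval (-x)) = sign p.leadingCoeff * sign ((-1 : ℝ) ^ p.natDegree) := by
  filter_upwards [eventually_atTop_sign_eval (p.comp (-X))] with x hx
  rw [leadingCoeff_comp (by simp)] at hx
  simpa [sign_mul] using hx

end SignMatching

section PseudoRemainder

open Polynomial

variable {A : Type*} [CommRing A]

/-- `r` is a pseudo-remainder of `f` modulo `g`: a remainder of a multiple of `f` by a power of the
leading coefficient of `g`, so that no division in `A` is needed. -/
def IsPseudoRem (f g r : A[X]) : Prop :=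
  r.degree < g.degree ∧ ∃ (k : ℕ) (h : A[X]), C g.leadingCoeff ^ k * f = h * g + r

lemma isPseudoRem_self {f g : A[X]} (hfg : f.degree < g.degree) : IsPseudoRem f g f :=
  ⟨hfg, 0, 0, by simp⟩

lemma degree_C_leadingCoeff_mul_sub_lt [IsDomain A] {f g : A[X]} (hg : g ≠ 0)
    (hgf : g.degree ≤ f.degree) :
    (C g.leadingCoeff * f - C f.leadingCoeff * X ^ (f.natDegree - g.natDegree) * g).degree <
      f.degree := by
  have hf : f ≠ 0 := fun hf ↦ hg (by simpa [hf] using hgf)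
  have hle : g.natDegree ≤ f.natDegree := natDegree_le_natDegree hgf
  have hdegree : (C g.leadingCoeff * f).degree = f.degree :=
    degree_C_mul (leadingCoeff_ne_zero.2 hg)
  have hdegree' :
      (C f.leadingCoeff * X ^ (f.natDegree - g.natDegree) * g).degree = f.degree := by
    rw [degree_mul, degree_C_mul_X_pow _ (leadingCoeff_ne_zero.2 hf), degree_eq_natDegree hg,
      degree_eq_natDegree hf]
    exact_mod_cast Nat.sub_add_cancel hle
  rw [← hdegree]
  refine degree_sub_lt_left (hdegree.trans hdegree'.symm) ?_ ?_
  · exact mul_ne_zero (C_ne_zero.2 (leadingCoeff_ne_zero.2 hg)) hf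
  · rw [leadingCoeff_mul, leadingCoeff_mul, leadingCoeff_C_mul_X_pow, leadingCoeff_C, mul_comm]

lemma exists_isPseudoRem [IsDomain A] (f : A[X]) {g : A[X]} (hg : g ≠ 0) :
    ∃ r, IsPseudoRem f g r := by
  induction f using degree_lt_wf.induction with
  | _ f ih =>
  rcases lt_or_ge f.degree g.degree with hfg | hgf
  · exact ⟨f, isPseudoRem_self hfg⟩
  obtain ⟨r, hr, k, h, heq⟩ := ih _ (degree_C_leadingCoeff_mul_sub_lt hg hgf)
  refine ⟨r, hr, k + 1,
    h + C g.leadingCoeff ^ k * (C f.leadingCoeff * X ^ (f.natDegree - g.natDegree)), ?_⟩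
  linear_combination heq

/-- Specializing at a root of `g` turns the defining identity of a pseudo-remainder into
`(e lc)^k * f(c) = r(c)`. -/
lemma IsPseudoRem.sign_pow_mul_sign_eval {f g r : A[X]} (hr : IsPseudoRem f g r) :
    ∃ k : ℕ, ∀ (e : A →+* ℝ) (c : ℝ), (g.map e).eval c = 0 →
      sign (e g.leadingCoeff) ^ k * sign ((f.map e).eval c) = sign ((r.map e).eval c) := by
  obtain ⟨-, k, h, heq⟩ := hr
  refine ⟨k, fun e c hc ↦ ?_⟩
  have heval := congrArg (fun t ↦ (t.map e).eval c) heq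
  simp only [Polynomial.map_mul, Polynomial.map_pow, map_C, Polynomial.map_add, eval_mul,
    eval_pow, eval_C, eval_add, hc, mul_zero, zero_add] at heval
  rw [← sign_pow, ← sign_mul, heval]

/-- The family `L` is closed, in degrees at least `d`, under the operations that determine the sign
diagram of a polynomial from those of polynomials of smaller degree: derivatives, truncations, and
pseudo-remainders modulo members of degree at least `d`. -/
def IsClosedFrom (d : ℕ) (L : Finset A[X]) : Prop :=
  ∀ g ∈ L, (d : WithBot ℕ) ≤ g.degree →
    derivative g ∈ L ∧ g.eraseLead ∈ L ∧ ∀ f ∈ L, ∃ r ∈ L, IsPseudoRem f g r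

lemma IsClosedFrom.of_forall_degree_lt {d : ℕ} {L : Finset A[X]}
    (hL : ∀ g ∈ L, g.degree < d) : IsClosedFrom d L :=
  fun g hg hd ↦ absurd (hL g hg) hd.not_gt

/-- Because the polynomials added in degree `d` have smaller degree, closing a family degree by
degree, from the top down, terminates. -/
lemma exists_finset_closing_degree [IsDomain A] (d : ℕ) (L : Finset A[X]) :
    ∃ N : Finset A[X], (∀ t ∈ N, t.degree < d) ∧ ∀ g ∈ L, g.degree = (d : WithBot ℕ) →
      derivative g ∈ N ∧ g.eraseLead ∈ N ∧ ∀ f ∈ L, ∃ r ∈ N, IsPseudoRem f g r := by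
  classical
  have hne {g : A[X]} (hg : g.degree = (d : WithBot ℕ)) : g ≠ 0 := by
    rintro rfl
    simp at hg
  have hrem (f g : A[X]) : ∃ r, g.degree = (d : WithBot ℕ) → IsPseudoRem f g r := by
    by_cases hg : g.degree = (d : WithBot ℕ)
    · exact (exists_isPseudoRem f (hne hg)).imp fun r hr _ ↦ hr
    · exact ⟨0, fun h ↦ absurd h hg⟩
  choose rem hrem using hrem
  set D := L.filter fun g ↦ g.degree = (d : WithBot ℕ) with hD
  refine ⟨D.image derivative ∪ D.image eraseLead ∪ Finset.image₂ rem L D, fun t ht ↦ ?_,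
    fun g hg hd ↦ ?_⟩
  · simp only [hD, Finset.mem_union, Finset.mem_image, Finset.mem_image₂,
      Finset.mem_filter] at ht
    rcases ht with (⟨g, ⟨-, hd⟩, rfl⟩ | ⟨g, ⟨-, hd⟩, rfl⟩) | ⟨f, -, g, ⟨-, hd⟩, rfl⟩ <;> rw [← hd]
    · exact degree_derivative_lt (hne hd)
    · exact degree_eraseLead_lt (hne hd)
    · exact (hrem f g hd).1
  · have hgD : g ∈ D := Finset.mem_filter.2 ⟨hg, hd⟩
    simp only [Finset.mem_union]
    exact ⟨Or.inl (Or.inl (Finset.mem_image_of_mem _ hgD)),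
      Or.inl (Or.inr (Finset.mem_image_of_mem _ hgD)),
      fun f hf ↦ ⟨rem f g, Or.inr (Finset.mem_image₂_of_mem hf hgD), hrem f g hd⟩⟩

lemma IsClosedFrom.exists_superset_of_succ [IsDomain A] {d : ℕ} {L : Finset A[X]}
    (hL : IsClosedFrom (d + 1) L) : ∃ L', L ⊆ L' ∧ IsClosedFrom d L' := by
  classical
  obtain ⟨N, hNlt, hN⟩ := exists_finset_closing_degree d L
  refine ⟨L ∪ N, Finset.subset_union_left, fun g hg hd ↦ ?_⟩
  have hgL : g ∈ L := (Finset.mem_union.1 hg).resolve_right fun h ↦ (hNlt g h).not_ge hd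
  have hclosed : derivative g ∈ L ∪ N ∧ g.eraseLead ∈ L ∪ N ∧
      ∀ f ∈ L, ∃ r ∈ L ∪ N, IsPseudoRem f g r := by
    simp only [Finset.mem_union]
    rcases hd.eq_or_lt with heq | hlt
    · obtain ⟨hder, htrunc, hrem⟩ := hN g hgL heq.symm
      exact ⟨Or.inr hder, Or.inr htrunc, fun f hf ↦ (hrem f hf).imp fun r ⟨hr, h⟩ ↦ ⟨Or.inr hr, h⟩⟩
    · have hle : ((d + 1 : ℕ) : WithBot ℕ) ≤ g.degree := by
        exact_mod_cast Nat.WithBot.add_one_le_of_lt hlt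
      obtain ⟨hder, htrunc, hrem⟩ := hL g hgL hle
      exact ⟨Or.inl hder, Or.inl htrunc, fun f hf ↦ (hrem f hf).imp fun r ⟨hr, h⟩ ↦ ⟨Or.inl hr, h⟩⟩
  refine ⟨hclosed.1, hclosed.2.1, fun f hf ↦ ?_⟩
  rcases Finset.mem_union.1 hf with hf | hfN
  · exact hclosed.2.2 f hf
  · exact ⟨f, hf, isPseudoRem_self ((hNlt f hfN).trans_le hd)⟩

lemma IsClosedFrom.exists_superset [IsDomain A] {d : ℕ} {L : Finset A[X]}
    (hL : IsClosedFrom d L) : ∃ L', L ⊆ L' ∧ IsClosedFrom 0 L' := by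
  induction d generalizing L with
  | zero => exact ⟨L, subset_rfl, hL⟩
  | succ d ih =>
    obtain ⟨L₁, hL₁, hclosed⟩ := hL.exists_superset_of_succ
    obtain ⟨L₂, hL₂, hclosed₂⟩ := ih hclosed
    exact ⟨L₂, hL₁.trans hL₂, hclosed₂⟩

lemma exists_isClosedFrom_zero_superset [IsDomain A] (L : Finset A[X]) :
    ∃ L', L ⊆ L' ∧ IsClosedFrom 0 L' := by
  refine (IsClosedFrom.of_forall_degree_lt (d := L.sup natDegree + 1) fun g hg ↦ ?_).exists_superset
  refine degree_le_natDegree.trans_lt ?_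
  exact_mod_cast Nat.lt_succ_of_le (Finset.le_sup (f := natDegree) hg)

lemma IsClosedFrom.of_insert [DecidableEq A[X]] {f : A[X]} {L : Finset A[X]}
    (hL : IsClosedFrom 0 (insert f L)) (hmax : ∀ g ∈ L, g.degree ≤ f.degree) :
    IsClosedFrom 0 L := by
  intro g hg hd
  have hmem {t : A[X]} (ht : t ∈ insert f L) (hlt : t.degree < g.degree) : t ∈ L :=
    Finset.mem_of_mem_insert_of_ne ht (by
      rintro rfl
      exact (hmax g hg).not_gt hlt)
  have hg0 : g ≠ 0 := zero_le_degree_iff.1 hd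
  obtain ⟨hder, htrunc, hrem⟩ := hL g (Finset.mem_insert_of_mem hg) hd
  refine ⟨hmem hder (degree_derivative_lt hg0), hmem htrunc (degree_eraseLead_lt hg0),
    fun t ht ↦ ?_⟩
  obtain ⟨r, hr, hr'⟩ := hrem t (Finset.mem_insert_of_mem ht)
  exact ⟨r, hmem hr hr'.1, hr'⟩

end PseudoRemainder

section Specialization

open Polynomial

variable {A : Type*} [CommRing A] {e e' : A →+* ℝ} {L : Finset A[X]}

lemma map_eraseLead_of_map_leadingCoeff_eq_zero_s11 {B : Type*} [Semiring B] {e : A →+* B} {f : A[X]}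
    (h : e f.leadingCoeff = 0) : f.eraseLead.map e = f.map e := by
  have heq := congrArg (Polynomial.map e) f.eraseLead_add_C_mul_X_pow
  simpa only [Polynomial.map_add, Polynomial.map_mul, map_C, h, C_0, zero_mul, add_zero] using heq

lemma eq_zero_iff_of_sign_eq {x y : ℝ} (h : sign x = sign y) : x = 0 ↔ y = 0 := by
  rw [← sign_eq_zero_iff, h, sign_eq_zero_iff]

lemma IsClosedFrom.exists_map_leadingCoeff_ne_zero {B : Type*} [Semiring B] {e : A →+* B}
    (hL : IsClosedFrom 0 L) {g : A[X]} (hg : g ∈ L) (hne : g.map e ≠ 0) :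
    ∃ g' ∈ L, g'.map e = g.map e ∧ e g'.leadingCoeff ≠ 0 := by
  induction g using degree_lt_wf.induction with
  | _ g ih =>
  by_cases h : e g.leadingCoeff = 0
  · have hg0 : g ≠ 0 := by
      rintro rfl
      exact hne (Polynomial.map_zero e)
    have hmem : g.eraseLead ∈ L := (hL g hg (by simpa using zero_le_degree_iff.2 hg0)).2.1
    rw [← map_eraseLead_of_map_leadingCoeff_eq_zero_s11 h] at hne ⊢
    exact ih _ (degree_eraseLead_lt hg0) hmem hne
  · exact ⟨g, hg, rfl, h⟩

lemma IsPseudoRem.sign_eval_eq {f g r : A[X]} (hr : IsPseudoRem f g r)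
    (hlc : sign (e g.leadingCoeff) = sign (e' g.leadingCoeff)) (hne : e g.leadingCoeff ≠ 0)
    {c c' : ℝ} (hc : (g.map e).eval c = 0) (hc' : (g.map e').eval c' = 0)
    (hrcc' : sign ((r.map e).eval c) = sign ((r.map e').eval c')) :
    sign ((f.map e).eval c) = sign ((f.map e').eval c') := by
  obtain ⟨k, hk⟩ := hr.sign_pow_mul_sign_eval
  have hs : sign (e' g.leadingCoeff) ^ k ≠ 0 := pow_ne_zero k (hlc ▸ sign_ne_zero.2 hne)
  refine mul_left_cancel₀ hs ?_
  rw [hk e' c' hc', ← hrcc', ← hk e c hc, hlc]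

/-- At a root `c` of a nonzero `g.map e` with `g ∈ L`, the sign of `f` is determined by that of its
pseudo-remainder modulo a truncation of `g` whose leading coefficient survives specialization. -/
lemma IsClosedFrom.sign_eval_eq_of_root [DecidableEq A[X]] {f : A[X]}
    (hL : IsClosedFrom 0 (insert f L)) (hmax : ∀ g ∈ L, g.degree ≤ f.degree)
    (hlc : ∀ g ∈ L, sign (e g.leadingCoeff) = sign (e' g.leadingCoeff)) {c c' : ℝ}
    (hagree : SignsAgree (Polynomial.map e) (Polynomial.map e') (L : Set A[X]) c c')
    (hroot : ∃ g ∈ (L : Set A[X]), g.map e ≠ 0 ∧ (g.map e).eval c = 0) :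
    sign ((f.map e).eval c) = sign ((f.map e').eval c') := by
  obtain ⟨g₀, hg₀, hne, hroot⟩ := hroot
  obtain ⟨g, hg, hmap, hlead⟩ := (hL.of_insert hmax).exists_map_leadingCoeff_ne_zero hg₀ hne
  have hc : (g.map e).eval c = 0 := hmap ▸ hroot
  have hc' : (g.map e').eval c' = 0 := (eq_zero_iff_of_sign_eq (hagree g hg)).1 hc
  have hg0 : g ≠ 0 := by
    rintro rfl
    exact hlead (by rw [leadingCoeff_zero, map_zero])
  obtain ⟨r, hr, hrem⟩ := (hL g (Finset.mem_insert_of_mem hg)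
    (by simpa using zero_le_degree_iff.2 hg0)).2.2 f (Finset.mem_insert_self f L)
  have hrL : r ∈ L := Finset.mem_of_mem_insert_of_ne hr fun h ↦
    (hmax g hg).not_gt (h ▸ hrem.1)
  exact hrem.sign_eval_eq (hlc g hg) hlead hc hc' (hagree r hrL)

lemma eventually_sign_eval_map_eq {f : A[X]} (hne : e f.leadingCoeff ≠ 0)
    (hlc : sign (e f.leadingCoeff) = sign (e' f.leadingCoeff)) :
    ∀ᶠ M in atTop, sign ((f.map e).eval (-M)) = sign ((f.map e').eval (-M)) ∧
      sign ((f.map e).eval M) = sign ((f.map e').eval M) := by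
  have hne' : e' f.leadingCoeff ≠ 0 := fun h ↦ hne ((eq_zero_iff_of_sign_eq hlc).2 h)
  filter_upwards [eventually_atTop_sign_eval (f.map e), eventually_atTop_sign_eval (f.map e'),
    eventually_atTop_sign_eval_neg (f.map e), eventually_atTop_sign_eval_neg (f.map e')]
    with M htop htop' hbot hbot'
  rw [hbot, hbot', htop, htop', leadingCoeff_map_of_leadingCoeff_ne_zero _ hne,
    leadingCoeff_map_of_leadingCoeff_ne_zero _ hne', natDegree_map_of_leadingCoeff_ne_zero _ hne,
    natDegree_map_of_leadingCoeff_ne_zero _ hne', hlc]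
  exact ⟨rfl, rfl⟩

lemma IsClosedFrom.eventually_signDiagramsMatch_insert [DecidableEq A[X]] {f : A[X]}
    (hL : IsClosedFrom 0 (insert f L)) (hmax : ∀ g ∈ L, g.degree ≤ f.degree)
    (hlc : ∀ g ∈ insert f L, sign (e g.leadingCoeff) = sign (e' g.leadingCoeff))
    (hmatch : ∀ᶠ M in atTop,
      SignDiagramsMatch (Polynomial.map e) (Polynomial.map e') (L : Set A[X]) (-M) M (-M) M) :
    ∀ᶠ M in atTop, SignDiagramsMatch (Polynomial.map e) (Polynomial.map e')
      (insert f (L : Set A[X])) (-M) M (-M) M := by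
  have hmem {t : A[X]} (ht : t ∈ insert f L) (hlt : t.degree < f.degree) : t ∈ (L : Set A[X]) :=
    Finset.mem_of_mem_insert_of_ne ht fun h ↦ hlt.ne (congrArg degree h)
  rcases eq_or_ne f 0 with rfl | hf0
  · filter_upwards [hmatch] with M hM
    exact hM.insert_of_signsAgree fun x x' _ ↦ by simp only [Polynomial.map_zero, eval_zero]
  obtain ⟨hder, htrunc, -⟩ := hL f (Finset.mem_insert_self f L)
    (by simpa using zero_le_degree_iff.2 hf0)
  have hlcf := hlc f (Finset.mem_insert_self f L)
  by_cases hlead : e f.leadingCoeff = 0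
  · have hlead' : e' f.leadingCoeff = 0 := (eq_zero_iff_of_sign_eq hlcf).1 hlead
    filter_upwards [hmatch] with M hM
    refine hM.insert_of_signsAgree fun x x' hx ↦ ?_
    rw [← map_eraseLead_of_map_leadingCoeff_eq_zero_s11 hlead,
      ← map_eraseLead_of_map_leadingCoeff_eq_zero_s11 hlead']
    exact hx _ (hmem htrunc (degree_eraseLead_lt hf0))
  filter_upwards [hmatch, eventually_sign_eval_map_eq hlead hlcf] with M hM hends
  refine hM.insert_of_derivative (fun h ↦ hlead ?_) (fun x x' hx ↦ ?_) (fun c c' hroot hc ↦ ?_)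
    hends.1 hends.2
  · rw [← coeff_natDegree, ← coeff_map, h, coeff_zero]
  · rw [derivative_map, derivative_map]
    exact hx _ (hmem hder (degree_derivative_lt hf0))
  · exact hL.sign_eval_eq_of_root hmax (fun g hg ↦ hlc g (Finset.mem_insert_of_mem hg)) hc hroot

theorem IsClosedFrom.eventually_signDiagramsMatch (hL : IsClosedFrom 0 L)
    (hlc : ∀ g ∈ L, sign (e g.leadingCoeff) = sign (e' g.leadingCoeff)) :
    ∀ᶠ M in atTop,
      SignDiagramsMatch (Polynomial.map e) (Polynomial.map e') (L : Set A[X]) (-M) M (-M) M := by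
  classical
  induction L using Finset.induction_on_max_value (degree (R := A)) with
  | empty =>
    filter_upwards [eventually_gt_atTop 0] with M hM
    exact .const (by linarith) (by linarith) fun x _ x' _ i hi ↦ by simp at hi
  | insert f L _ hmax ih =>
    rw [Finset.coe_insert]
    exact hL.eventually_signDiagramsMatch_insert hmax hlc
      (ih (hL.of_insert hmax) fun g hg ↦ hlc g (Finset.mem_insert_of_mem hg))

end Specialization

section SignDefinable

open MvPolynomial

variable {σ τ : Type*}

/-- Real functions given by evaluating a polynomial; used to substitute coordinates and their
differences into sign-definable predicates. -/
def IsPolynomialFn (f : (σ → ℝ) → ℝ) : Prop :=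
  ∃ P : MvPolynomial σ ℝ, ∀ y, eval y P = f y

namespace IsPolynomialFn

lemma apply (i : σ) : IsPolynomialFn fun y : σ → ℝ ↦ y i :=
  ⟨X i, fun _ ↦ eval_X i⟩

lemma sub {f g : (σ → ℝ) → ℝ} (hf : IsPolynomialFn f) (hg : IsPolynomialFn g) :
    IsPolynomialFn fun y ↦ f y - g y := by
  obtain ⟨P, hP⟩ := hf
  obtain ⟨Q, hQ⟩ := hg
  exact ⟨P - Q, fun y ↦ by rw [map_sub, hP, hQ]⟩

lemma reindex {f : (σ → ℝ) → ℝ} (hf : IsPolynomialFn f) (e : σ → τ) :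
    IsPolynomialFn fun y : τ → ℝ ↦ f fun i ↦ y (e i) := by
  obtain ⟨P, hP⟩ := hf
  exact ⟨rename e P, fun y ↦ by rw [eval_rename, hP]; rfl⟩

end IsPolynomialFn

/-- Predicates that depend only on the signs of finitely many polynomials. These are the
semi-algebraic ones (`isSemialgebraic_iff_signDefinable`), in a form that is closed under logical
operations at once. -/
def SignDefinable (S : (σ → ℝ) → Prop) : Prop :=
  ∃ G : Finset (MvPolynomial σ ℝ), ∀ y y' : σ → ℝ,
    (∀ g ∈ G, sign (eval y g) = sign (eval y' g)) → S y → S y'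

namespace SignDefinable

variable {S T : (σ → ℝ) → Prop}

protected lemma not (hS : SignDefinable S) : SignDefinable fun y ↦ ¬ S y := by
  obtain ⟨G, hG⟩ := hS
  exact ⟨G, fun y y' h hy hy' ↦ hy (hG y' y (fun g hg ↦ (h g hg).symm) hy')⟩

lemma forall_finite {ι : Type*} [Finite ι] {S : ι → (σ → ℝ) → Prop}
    (hS : ∀ i, SignDefinable (S i)) : SignDefinable fun y ↦ ∀ i, S i y := by
  classical
  have := Fintype.ofFinite ι
  choose G hG using hS
  exact ⟨Finset.univ.biUnion G, fun y y' h hy i ↦ hG i y y'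
    (fun g hg ↦ h g (Finset.mem_biUnion.2 ⟨i, Finset.mem_univ i, hg⟩)) (hy i)⟩

protected lemma and (hS : SignDefinable S) (hT : SignDefinable T) :
    SignDefinable fun y ↦ S y ∧ T y := by
  classical
  obtain ⟨G, hG⟩ := hS
  obtain ⟨H, hH⟩ := hT
  refine ⟨G ∪ H, fun y y' h ↦ And.imp (hG y y' fun g hg ↦ ?_) (hH y y' fun g hg ↦ ?_)⟩
  · exact h g (Finset.mem_union_left H hg)
  · exact h g (Finset.mem_union_right G hg)

protected lemma imp (hS : SignDefinable S) (hT : SignDefinable T) :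
    SignDefinable fun y ↦ S y → T y := by
  simpa only [not_and, not_not] using (hS.and hT.not).not

lemma of_le {f g : (σ → ℝ) → ℝ} (hf : IsPolynomialFn f) (hg : IsPolynomialFn g) :
    SignDefinable fun y ↦ f y ≤ g y := by
  obtain ⟨P, hP⟩ := hg.sub hf
  refine ⟨{P}, fun y y' h (hy : f y ≤ g y) ↦ show f y' ≤ g y' from ?_⟩
  have hsign := h P (Finset.mem_singleton_self P)
  rw [hP, hP] at hsign
  rwa [← sub_nonneg, ← sign_nonneg_iff, ← hsign, sign_nonneg_iff, sub_nonneg]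

lemma of_eq {f g : (σ → ℝ) → ℝ} (hf : IsPolynomialFn f) (hg : IsPolynomialFn g) :
    SignDefinable fun y ↦ f y = g y := by
  simpa only [← le_antisymm_iff] using (of_le hf hg).and (of_le hg hf)

protected lemma comp {S : (τ → ℝ) → Prop} (hS : SignDefinable S) {t : (σ → ℝ) → τ → ℝ}
    (ht : ∀ j, IsPolynomialFn fun y ↦ t y j) : SignDefinable fun y ↦ S (t y) := by
  classical
  obtain ⟨G, hG⟩ := hS
  choose P hP using ht
  have heval (y : σ → ℝ) (g : MvPolynomial τ ℝ) : eval y (bind₁ P g) = eval (t y) g := by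
    rw [show t y = fun j ↦ eval y (P j) from funext fun j ↦ (hP j y).symm]
    exact eval₂Hom_bind₁ _ _ _ _
  refine ⟨G.image (bind₁ P), fun y y' h hy ↦ hG _ _ (fun g hg ↦ ?_) hy⟩
  rw [← heval, ← heval]
  exact h _ (Finset.mem_image_of_mem _ hg)

/-- The Tarski–Seidenberg theorem, for one bound variable. -/
theorem exists_real {R : (σ → ℝ) → ℝ → Prop}
    (hR : SignDefinable fun z : Option σ → ℝ ↦ R (fun i ↦ z (some i)) (z none)) :
    SignDefinable fun y ↦ ∃ r, R y r := by
  classical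
  obtain ⟨G, hG⟩ := hR
  obtain ⟨L, hGL, hL⟩ := exists_isClosedFrom_zero_superset (G.image (optionEquivLeft ℝ σ))
  refine ⟨L.image Polynomial.leadingCoeff, fun y y' h ⟨r, hr⟩ ↦ ?_⟩
  have hmatch := hL.eventually_signDiagramsMatch (e := eval y) (e' := eval y')
    fun g hg ↦ h _ (Finset.mem_image_of_mem _ hg)
  obtain ⟨M, hM, hrM⟩ := (hmatch.and (eventually_gt_atTop |r|)).exists
  obtain ⟨r', hr'⟩ := hM.exists_signsAgree (x := r) (abs_lt.1 hrM)
  refine ⟨r', hG (fun o ↦ o.elim r y) (fun o ↦ o.elim r' y') (fun g hg ↦ ?_) hr⟩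
  rw [optionEquivLeft_elim_eval, optionEquivLeft_elim_eval]
  exact hr' _ (hGL (Finset.mem_image_of_mem _ hg))

theorem exists_pi [Finite τ] {R : (σ → ℝ) → (τ → ℝ) → Prop}
    (hR : SignDefinable fun z : σ ⊕ τ → ℝ ↦ R (fun i ↦ z (.inl i)) fun j ↦ z (.inr j)) :
    SignDefinable fun y ↦ ∃ v, R y v := by
  induction τ using Finite.induction_empty_option with
  | @of_equiv α β e ih =>
    have hcomp := ih (R := fun y v ↦ R y fun j ↦ v (e.symm j)) <| hR.comp
      (t := fun z : σ ⊕ α → ℝ ↦ fun j ↦ z (j.map id e.symm)) fun j ↦ .apply _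
    simp only [(e.arrowCongr (.refl ℝ)).surjective.exists]
    exact hcomp
  | h_empty =>
    simp only [Unique.exists_iff]
    exact hR.comp (t := fun y ↦ Sum.elim y _) (by rintro (i | ⟨⟨⟩⟩); exact .apply i)
  | @h_option α _ ih =>
    have hcomp := ih (R := fun y v ↦ ∃ r, R y (Equiv.piOptionEquivProd.symm (r, v))) <|
      exists_real <| hR.comp (t := fun z : Option (σ ⊕ α) → ℝ ↦ Sum.elim (fun i ↦ z (some (.inl i)))
        (Equiv.piOptionEquivProd.symm (z none, fun j ↦ z (some (.inr j)))))
      (by rintro (i | _ | j) <;> exact .apply _)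
    simp only [Equiv.piOptionEquivProd.symm.surjective.exists, Prod.exists,
      exists_comm (α := ℝ)]
    exact hcomp

lemma forall_pi [Finite τ] {R : (σ → ℝ) → (τ → ℝ) → Prop}
    (hR : SignDefinable fun z : σ ⊕ τ → ℝ ↦ R (fun i ↦ z (.inl i)) fun j ↦ z (.inr j)) :
    SignDefinable fun y ↦ ∀ v, R y v := by
  simpa only [not_exists, not_not] using (exists_pi (R := fun y v ↦ ¬ R y v) hR.not).not

end SignDefinable

variable {n : ℕ}

lemma IsSemialgebraic.signDefinable {S : Set (Fin n → ℝ)} (hS : IsSemialgebraic S) :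
    SignDefinable fun y ↦ y ∈ S := by
  classical
  obtain ⟨N, T, hT, rfl⟩ := hS
  choose m P Q hPQ using hT
  refine ⟨Finset.univ.biUnion fun k ↦ insert (Q k) (Finset.univ.image (P k)),
    fun y y' h hy ↦ ?_⟩
  obtain ⟨k, hk⟩ := mem_iUnion.1 hy
  have hsign (g : MvPolynomial (Fin n) ℝ) (hg : g = Q k ∨ ∃ i, P k i = g) :
      sign (eval y g) = sign (eval y' g) := by
    refine h g (Finset.mem_biUnion.2 ⟨k, Finset.mem_univ k, ?_⟩)
    simpa using hg
  refine mem_iUnion.2 ⟨k, ?_⟩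
  rw [hPQ k] at hk ⊢
  refine ⟨fun i ↦ ?_, (eq_zero_iff_of_sign_eq (hsign _ (.inl rfl))).1 hk.2⟩
  rw [← sign_eq_one_iff, ← hsign (P k i) (.inr ⟨i, rfl⟩), sign_eq_one_iff]
  exact hk.1 i

lemma exists_sign_eval_eq_iff (g : MvPolynomial σ ℝ) (s : SignType) :
    ∃ P Q : MvPolynomial σ ℝ, ∀ x, sign (eval x g) = s ↔ 0 < eval x P ∧ eval x Q = 0 := by
  rcases s.trichotomy with rfl | rfl | rfl
  · exact ⟨-g, 0, fun x ↦ by simp [sign_eq_neg_one_iff]⟩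
  · exact ⟨1, g, fun x ↦ by simp [sign_eq_zero_iff]⟩
  · exact ⟨g, 0, fun x ↦ by simp [sign_eq_one_iff]⟩

lemma exists_forall_sign_eval_eq_iff {ι : Type*} [Finite ι] (g : ι → MvPolynomial σ ℝ)
    (s : ι → SignType) : ∃ (m : ℕ) (P : Fin m → MvPolynomial σ ℝ) (Q : MvPolynomial σ ℝ),
      ∀ x, (∀ i, sign (eval x (g i)) = s i) ↔ (∀ j, 0 < eval x (P j)) ∧ eval x Q = 0 := by
  obtain ⟨m, ⟨e⟩⟩ := Finite.exists_equiv_fin ι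
  choose P Q hPQ using fun i ↦ exists_sign_eval_eq_iff (g i) (s i)
  refine ⟨m, fun j ↦ P (e.symm j), ∑ j, Q (e.symm j) ^ 2, fun x ↦ ?_⟩
  have hsum : eval x (∑ j, Q (e.symm j) ^ 2) = 0 ↔ ∀ j, eval x (Q (e.symm j)) = 0 := by
    simp only [map_sum, map_pow]
    rw [Finset.sum_eq_zero_iff_of_nonneg fun j _ ↦ sq_nonneg _]
    simp
  rw [hsum, ← forall_and, ← e.symm.forall_congr_right]
  exact forall_congr' fun j ↦ hPQ (e.symm j) x

lemma isSemialgebraic_iUnion_sign {ι I : Type*} [Finite ι] [Finite I]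
    (g : ι → MvPolynomial (Fin n) ℝ) (s : I → ι → SignType) :
    IsSemialgebraic (⋃ k, {x | ∀ i, sign (eval x (g i)) = s k i}) := by
  obtain ⟨N, ⟨e⟩⟩ := Finite.exists_equiv_fin I
  refine ⟨N, fun j ↦ {x | ∀ i, sign (eval x (g i)) = s (e.symm j) i}, fun j ↦ ?_,
    (e.symm.surjective.iUnion_comp _).symm⟩
  obtain ⟨m, P, Q, hPQ⟩ := exists_forall_sign_eval_eq_iff g (s (e.symm j))
  exact ⟨m, P, Q, ext hPQ⟩

theorem isSemialgebraic_iff_signDefinable {S : Set (Fin n → ℝ)} :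
    IsSemialgebraic S ↔ SignDefinable fun y ↦ y ∈ S := by
  refine ⟨IsSemialgebraic.signDefinable, fun ⟨G, hG⟩ ↦ ?_⟩
  have hS : S = ⋃ s : {s : G → SignType // ∃ y ∈ S, ∀ g, sign (eval y g.1) = s g},
      {x | ∀ g, sign (eval x g.1) = s.1 g} := by
    refine ext fun x ↦ ⟨fun hx ↦ mem_iUnion.2 ⟨⟨_, x, hx, fun _ ↦ rfl⟩, fun _ ↦ rfl⟩, fun hx ↦ ?_⟩
    obtain ⟨⟨s, y, hy, hys⟩, hxs⟩ := mem_iUnion.1 hx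
    exact hG y x (fun g hg ↦ (hys ⟨g, hg⟩).trans (hxs ⟨g, hg⟩).symm) hy
  rw [hS]
  exact isSemialgebraic_iUnion_sign (fun g : G ↦ g.1)
    fun s : {s : G → SignType // ∃ y ∈ S, ∀ g, sign (eval y g.1) = s g} ↦ s.1

lemma SignDefinable.eq_apply_of_isSemialgebraicFn {ν : (Fin n → ℝ) → ℝ} (hν : IsSemialgebraicFn ν)
    {u : (σ → ℝ) → ℝ} {t : (σ → ℝ) → Fin n → ℝ} (hu : IsPolynomialFn u)
    (ht : ∀ i, IsPolynomialFn fun y ↦ t y i) : SignDefinable fun y ↦ u y = ν (t y) := by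
  have hgraph (x : Fin n → ℝ) (r : ℝ) :
      (Fin.snoc x r : Fin (n + 1) → ℝ) ∈ {z : Fin (n + 1) → ℝ | ∃ x, z = Fin.snoc x (ν x)} ↔
        r = ν x := by
    refine ⟨fun ⟨x', h⟩ ↦ ?_, fun h ↦ ⟨x, by rw [h]⟩⟩
    obtain ⟨rfl, rfl⟩ := Fin.snoc_inj.1 h
    rfl
  simp only [← hgraph]
  refine (IsSemialgebraic.signDefinable hν).comp (Fin.lastCases ?_ fun i ↦ ?_)
  · simpa only [Fin.snoc_last] using hu
  · simpa only [Fin.snoc_castSucc] using ht i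

lemma SignDefinable.le_of_isSemialgebraicFn {ν : (Fin n → ℝ) → ℝ} (hν : IsSemialgebraicFn ν)
    {t u : (σ → ℝ) → Fin n → ℝ} (ht : ∀ i, IsPolynomialFn fun y ↦ t y i)
    (hu : ∀ i, IsPolynomialFn fun y ↦ u y i) : SignDefinable fun y ↦ ν (t y) ≤ ν (u y) := by
  have hex (y : σ → ℝ) : ν (t y) ≤ ν (u y) ↔
      ∃ r r' : ℝ, (r = ν (t y) ∧ r' = ν (u y)) ∧ r ≤ r' := by simp
  simp only [hex]
  refine .exists_real <| .exists_real <| .and (.and ?_ ?_) ?_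
  · exact .eq_apply_of_isSemialgebraicFn hν (.apply _) fun i ↦ ((ht i).reindex some).reindex some
  · exact .eq_apply_of_isSemialgebraicFn hν (.apply _) fun i ↦ ((hu i).reindex some).reindex some
  · exact .of_le (.apply _) (.apply _)

lemma SignDefinable.isBestApprox {ν : (Fin n → ℝ) → ℝ} (hν : IsSemialgebraicFn ν)
    {C : Set (Fin n → ℝ)} (hC : IsSemialgebraic C) {x z : (σ → ℝ) → Fin n → ℝ}
    (hx : ∀ i, IsPolynomialFn fun y ↦ x y i) (hz : ∀ i, IsPolynomialFn fun y ↦ z y i) :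
    SignDefinable fun y ↦ IsBestApprox ν C (x y) (z y) := by
  refine .and (hC.signDefinable.comp hz) <| .forall_pi <|
    .imp (hC.signDefinable.comp fun i ↦ .apply _) <|
    .le_of_isSemialgebraicFn hν (fun i ↦ ?_) fun i ↦ ?_
  · exact ((hx i).sub (hz i)).reindex Sum.inl
  · exact ((hx i).reindex Sum.inl).sub (.apply _)

lemma SignDefinable.isUniqueBestApprox {ν : (Fin n → ℝ) → ℝ} (hν : IsSemialgebraicFn ν)
    {C : Set (Fin n → ℝ)} (hC : IsSemialgebraic C) {x z : (σ → ℝ) → Fin n → ℝ}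
    (hx : ∀ i, IsPolynomialFn fun y ↦ x y i) (hz : ∀ i, IsPolynomialFn fun y ↦ z y i) :
    SignDefinable fun y ↦ IsUniqueBestApprox ν C (x y) (z y) := by
  refine .and (.isBestApprox hν hC hx hz) <| .forall_pi <| .imp ?_ ?_
  · exact .isBestApprox hν hC (fun i ↦ (hx i).reindex Sum.inl) fun i ↦ .apply _
  · simp only [funext_iff]
    exact .forall_finite fun i ↦ .of_eq (.apply _) ((hz i).reindex Sum.inl)

theorem isSemialgebraicProd_setOf_isUniqueBestApprox {ν : (Fin n → ℝ) → ℝ}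
    (hν : IsSemialgebraicFn ν) {C : Set (Fin n → ℝ)} (hC : IsSemialgebraic C) :
    IsSemialgebraicProd
      {p : (Fin n → ℝ) × (Fin n → ℝ) | IsUniqueBestApprox ν C p.1 p.2} := by
  have hsplit : {z : Fin (n + n) → ℝ | ∃ p ∈ {p : (Fin n → ℝ) × (Fin n → ℝ) |
      IsUniqueBestApprox ν C p.1 p.2}, z = Fin.append p.1 p.2} =
      {z | IsUniqueBestApprox ν C (fun i ↦ z (Fin.castAdd n i)) fun i ↦ z (Fin.natAdd n i)} := by
    refine ext fun z ↦ ⟨?_, fun h ↦ ⟨(_, _), h, Fin.append_castAdd_natAdd.symm⟩⟩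
    rintro ⟨p, hp : IsUniqueBestApprox ν C p.1 p.2, rfl⟩
    simpa only [mem_ofPred_eq, Fin.append_left, Fin.append_right] using hp
  rw [IsSemialgebraicProd, hsplit, isSemialgebraic_iff_signDefinable]
  exact .isUniqueBestApprox hν hC (fun i ↦ .apply _) fun i ↦ .apply _

end SignDefinable

theorem stmt11_general {n : ℕ} (C : Set (Fin n → ℝ))
    (hCne : C.Nonempty) (hCcl : IsClosed C) (hCsa : IsSemialgebraic C)
    (ν : (Fin n → ℝ) → ℝ)
    (hν_eq : ∀ x, ν x = 0 ↔ x = 0)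
    (hν_smul : ∀ (c : ℝ) (x), ν (c • x) = |c| * ν x)
    (hν_add : ∀ x y, ν (x + y) ≤ ν x + ν y)
    (hν_sa : IsSemialgebraicFn ν)
    (hν_star_diff : ∀ x : Fin n → ℝ, x ≠ 0 → DifferentiableAt ℝ (dualNu ν) x)
    (S : Set (Fin n → ℝ))
    (hS : S = {x | ¬ ∃! z, z ∈ C ∧ ν (x - z) = distNu ν C x})
    (Ω : Set ((Fin n → ℝ) × (Fin n → ℝ)))
    (hΩ : Ω = {p | p.1 ∉ S ∧ p.2 ∈ C ∧ distNu ν C p.1 = ν (p.1 - p.2)}) :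
    IsSemialgebraicProd Ω ∧ Prod.fst '' Ω = Sᶜ ∧ Dense Sᶜ := by
  have hν_nonneg := nonneg_of_homogeneous_of_subadditive hν_smul hν_add
  have hScompl : Sᶜ = {x | ∃ z, IsUniqueBestApprox ν C x z} := by
    ext x
    simp [hS, ← isBestApprox_iff_eq_distNu hν_nonneg, ExistsUnique, IsUniqueBestApprox]
  have hΩeq : Ω = {p | IsUniqueBestApprox ν C p.1 p.2} := by
    ext ⟨x, z⟩
    have hx : x ∉ S ↔ ∃ w, IsUniqueBestApprox ν C x w := Set.ext_iff.1 hScompl x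
    rw [hΩ, mem_ofPred_eq, hx, eq_comm, ← isBestApprox_iff_eq_distNu hν_nonneg]
    exact ⟨fun ⟨⟨w, hw⟩, hz⟩ ↦ hw.2 z hz ▸ hw, fun hz ↦ ⟨⟨z, hz⟩, hz.1⟩⟩
  refine ⟨hΩeq ▸ isSemialgebraicProd_setOf_isUniqueBestApprox hν_sa hCsa, ?_, ?_⟩
  · ext x
    simp [hΩeq, hScompl]
  · rw [hScompl]
    exact dense_setOf_isUniqueBestApprox hν_eq hν_smul hν_add hν_star_diff hCne hCcl

/-- With `C`, `ν` as in Theorem `stmt10` and `S(C)` the set of points without a unique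
best `ν`-approximation, the set `Ω_ν(C) = {(x,z) : x ∉ S(C), z ∈ C, distNu ν C x = ν(x−z)}`
is semi-algebraic, and its projection onto the first factor is `ℝⁿ \ S(C)`, a dense
subset of `ℝⁿ`. -/
theorem stmt11 {n : ℕ} (C : Set (Fin n → ℝ))
    (hCne : C.Nonempty) (hCcl : IsClosed C) (hCsa : IsSemialgebraic C)
    (ν : (Fin n → ℝ) → ℝ)
    (hν_eq : ∀ x, ν x = 0 ↔ x = 0)
    (hν_smul : ∀ (c : ℝ) (x), ν (c • x) = |c| * ν x)
    (hν_add : ∀ x y, ν (x + y) ≤ ν x + ν y)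
    (hν_sa : IsSemialgebraicFn ν)
    (hν_diff : ∀ x : Fin n → ℝ, x ≠ 0 → DifferentiableAt ℝ ν x)
    (hν_star_diff : ∀ x : Fin n → ℝ, x ≠ 0 → DifferentiableAt ℝ (dualNu ν) x)
    (S : Set (Fin n → ℝ))
    (hS : S = {x | ¬ ∃! z, z ∈ C ∧ ν (x - z) = distNu ν C x})
    (Ω : Set ((Fin n → ℝ) × (Fin n → ℝ)))
    (hΩ : Ω = {p | p.1 ∉ S ∧ p.2 ∈ C ∧ distNu ν C p.1 = ν (p.1 - p.2)}) :
    IsSemialgebraicProd Ω ∧ Prod.fst '' Ω = Sᶜ ∧ Dense Sᶜ :=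
  stmt11_general C hCne hCcl hCsa ν hν_eq hν_smul hν_add hν_sa hν_star_diff S hS Ω hΩ
end
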